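/- Fix an integer d ≥ 3 and a real p with 1/(d-1) < p < 1, and let q ∈ [0,1) satisfy q = (1-p+pq)^{d-1}. For 2 ≤ k ≤ d define β_k = C(d,k) p^k (1−q)^k q / (1−p+pq)^{k−1}. Then for every ε > 0 and b > 0 there exist c, R > 0 such that: if 𝒢 is a regular (b,d)-expander on n vertices with girth at least R, then with probability at least 1 − exp(−c n), the random graph G ∼ 𝒢_p satisfies | D*_k/n − β_k | < ε for every 2 ≤ k ≤ d, where D*_k is the number of vertices of degree exactly k in the 2-core C₁^{(2)}(G) of a largest connected component of G (degrees taken in the 2-core). -/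

import Mathlib

open scoped Classical symmDiff

noncomputable section

namespace Percolation

variable {V : Type} [Fintype V] [DecidableEq V]

/-- The edge set of `G` as a finset. -/
noncomputable def edgeFinset' (G : SimpleGraph V) : Finset (Sym2 V) :=
  Finset.univ.filter (· ∈ G.edgeSet)

/-- Probability that bond percolation on `G` with parameter `p` produces a spanning
subgraph satisfying `P`. -/
noncomputable def percProb (G : SimpleGraph V) (p : ℝ) (P : SimpleGraph V → Prop) : ℝ :=
  ∑ s ∈ (edgeFinset' G).powerset,
    (p ^ s.card * (1 - p) ^ ((edgeFinset' G).card - s.card)) *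
      (if P (SimpleGraph.fromEdgeSet (↑s)) then 1 else 0)

/-- Joint probability for two independent bond percolations on `G`. -/
noncomputable def percProb2 (G : SimpleGraph V) (p₁ p₂ : ℝ)
    (P : SimpleGraph V → SimpleGraph V → Prop) : ℝ :=
  ∑ s ∈ (edgeFinset' G).powerset, ∑ t ∈ (edgeFinset' G).powerset,
    (p₁ ^ s.card * (1 - p₁) ^ ((edgeFinset' G).card - s.card)) *
    (p₂ ^ t.card * (1 - p₂) ^ ((edgeFinset' G).card - t.card)) *
      (if P (SimpleGraph.fromEdgeSet (↑s)) (SimpleGraph.fromEdgeSet (↑t)) then 1 else 0)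

/-- Number of edges of `G` joining `S` to its complement. -/
noncomputable def cutCard (G : SimpleGraph V) (S : Finset V) : ℕ :=
  ((edgeFinset' G).filter (fun e => ∃ x ∈ S, ∃ y, y ∉ S ∧ e = s(x, y))).card

/-- `G` is a `(b,d)`-expander: max degree at most `d`, and every vertex set of size at most
`n/2` has at least `b|S|` edges to its complement. -/
def IsExpander (G : SimpleGraph V) (b : ℝ) (d : ℕ) : Prop :=
  (∀ v, (G.neighborSet v).ncard ≤ d) ∧
  ∀ S : Finset V, (S.card : ℝ) ≤ Fintype.card V / 2 → b * S.card ≤ cutCard G S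

/-- `G` is a regular `(b,d)`-expander. -/
def IsRegularExpander (G : SimpleGraph V) (b : ℝ) (d : ℕ) : Prop :=
  IsExpander G b d ∧ ∀ v, (G.neighborSet v).ncard = d

/-- The vertices of the connected component `c` of `G`. -/
noncomputable def compVerts (G : SimpleGraph V) (c : G.ConnectedComponent) : Finset V :=
  Finset.univ.filter (fun v => G.connectedComponentMk v = c)

/-- The edges of the connected component `c` of `G`. -/
noncomputable def compEdges (G : SimpleGraph V) (c : G.ConnectedComponent) : Finset (Sym2 V) :=
  (edgeFinset' G).filter (fun e => ∀ v ∈ e, G.connectedComponentMk v = c)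

/-- `c` is a largest connected component of `G`. -/
def IsLargestComp (G : SimpleGraph V) (c : G.ConnectedComponent) : Prop :=
  ∀ c' : G.ConnectedComponent, (compVerts G c').card ≤ (compVerts G c).card

/-- The 2-core of the connected component `c` of `G` : the maximal subgraph of `G`
supported inside `c` all of whose vertices have degree at least 2. -/
noncomputable def twoCoreComp (G : SimpleGraph V) (c : G.ConnectedComponent) : SimpleGraph V :=
  sSup {H : SimpleGraph V | H ≤ G ∧ (∀ v ∈ H.support, G.connectedComponentMk v = c) ∧
    ∀ v ∈ H.support, 2 ≤ (H.neighborSet v).ncard}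

/-- The event `A^R_{x,y}(H)`: the connected component of `y` in `H` with the edge `xy`
removed (if present) has at least `R` vertices. -/
def eventA (H : SimpleGraph V) (R : ℕ) (x y : V) : Prop :=
  R ≤ (compVerts (H.deleteEdges {s(x, y)})
        ((H.deleteEdges {s(x, y)}).connectedComponentMk y)).card

/-- `E₁(H)`: edges `xy` of `H` such that `A^R_{x,y}` or `A^R_{y,x}` holds. -/
noncomputable def E1set (H : SimpleGraph V) (R : ℕ) : Finset (Sym2 V) :=
  (edgeFinset' H).filter (fun e => ∃ x y, e = s(x, y) ∧ (eventA H R x y ∨ eventA H R y x))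

/-- `V₁(H)`: vertices `x` such that for some `y`, `xy ∈ E(H)` and `A^R_{x,y}` holds. -/
noncomputable def V1set (H : SimpleGraph V) (R : ℕ) : Finset V :=
  Finset.univ.filter (fun x => ∃ y, H.Adj x y ∧ eventA H R x y)

/-- `E₂(H)`: edges `xy` of `H` such that both `A^R_{x,y}` and `A^R_{y,x}` hold. -/
noncomputable def E2set (H : SimpleGraph V) (R : ℕ) : Finset (Sym2 V) :=
  (edgeFinset' H).filter (fun e => ∃ x y, e = s(x, y) ∧ eventA H R x y ∧ eventA H R y x)

/-- `V₂(H)`: vertices incident to an edge of `E₂(H)`. -/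
noncomputable def V2set (H : SimpleGraph V) (R : ℕ) : Finset V :=
  Finset.univ.filter (fun x => ∃ e ∈ E2set H R, x ∈ e)

/-- `V̄₁(H)`: vertices `y` such that `A^R_{x,y}(H)` holds for some `x`. -/
noncomputable def Vbar1 (H : SimpleGraph V) (R : ℕ) : Finset V :=
  Finset.univ.filter (fun y => ∃ x, eventA H R x y)

/-- `S` is `k`-thick in `H`: a union of pairwise disjoint subsets, each of size at least
`k`, each inducing a connected subgraph of `H`. -/
def IsThick (H : SimpleGraph V) (k : ℕ) (S : Finset V) : Prop :=
  ∃ P : Finset (Finset V),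
    (∀ T ∈ P, k ≤ T.card ∧ (H.induce (↑T : Set V)).Connected) ∧
    (↑P : Set (Finset V)).PairwiseDisjoint id ∧ S = P.biUnion id

/-- `S` is a separator of `K`. -/
def IsSeparator {W : Type} [Fintype W] (K : SimpleGraph W) (S : Finset W) : Prop :=
  ∃ A B : Finset W, Disjoint A B ∧ Disjoint A S ∧ Disjoint B S ∧
    (∀ w, w ∈ A ∨ w ∈ B ∨ w ∈ S) ∧
    (∀ a ∈ A, ∀ b ∈ B, ¬ K.Adj a b) ∧
    3 * A.card ≤ 2 * Fintype.card W ∧ 3 * B.card ≤ 2 * Fintype.card W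

end Percolation

/-!
If `𝒢` has large girth, then the part of `𝒢` seen from a directed edge up to a fixed depth is a
tree, and the probability that it contains an open path of length `r` is obtained by iterating
`x ↦ (1 - p + p * x) ^ (d - 1)` from `0`; the extinction probabilities converge to `q`. For large
`r` the number of surviving branches at a vertex is therefore nearly binomial with parameters `d`
and `p (1 - q)`, and the bounded difference method shows that the proportion of vertices with `k`
surviving branches is close to `β_k` with exponentially small error probability.

It remains to see that, up to few exceptions, the surviving branches at a vertex are exactly its
edges in the 2-core of the largest component. Write `𝒢_p` as the union of `𝒢_{p₁}` and an
independent sprinkling, with `p₁` so close to `p` that few vertices gain surviving branches. By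
expansion, the sprinkling links any two unions of large components of `𝒢_{p₁}` that are not too
small, even after the deletion of a few edges. Hence nearly all vertices with a surviving branch
stay in one component of `𝒢_p` after the deletion of any few edges. The parts of the largest
component hanging off the 2-core that have more than `r` vertices are attached by at most
`n / (r + 1)` edges. Deleting these would cut off every vertex with a surviving branch that does
not lead to the 2-core, so such vertices are rare.
-/

namespace Percolation

/-! ### Random subsets -/

section BernoulliSubsets

variable {α β ι : Type*}

/-- Expectation of `f` over the random subset of `E` containing each element independently
with probability `p`. -/
def bernoulliMean (p : ℝ) (E : Finset α) (f : Finset α → ℝ) : ℝ :=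
  ∑ s ∈ E.powerset, p ^ s.card * (1 - p) ^ (E.card - s.card) * f s

/-- Probability of the event `P` for the random subset of `E` containing each element
independently with probability `p`. -/
def bernoulliProb (p : ℝ) (E : Finset α) (P : Finset α → Prop) : ℝ :=
  bernoulliMean p E fun s => if P s then 1 else 0

variable {p : ℝ} {E : Finset α}

lemma bernoulliMean_empty (p : ℝ) (f : Finset α → ℝ) : bernoulliMean p ∅ f = f ∅ := by
  simp [bernoulliMean]

lemma bernoulliMean_add (p : ℝ) (E : Finset α) (f g : Finset α → ℝ) :
    bernoulliMean p E (fun s => f s + g s) = bernoulliMean p E f + bernoulliMean p E g := by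
  simp only [bernoulliMean, mul_add, Finset.sum_add_distrib]

lemma bernoulliMean_sub (p : ℝ) (E : Finset α) (f g : Finset α → ℝ) :
    bernoulliMean p E (fun s => f s - g s) = bernoulliMean p E f - bernoulliMean p E g := by
  simp only [bernoulliMean, mul_sub, Finset.sum_sub_distrib]

lemma bernoulliMean_neg (p : ℝ) (E : Finset α) (f : Finset α → ℝ) :
    bernoulliMean p E (fun s => - f s) = - bernoulliMean p E f := by
  simp only [bernoulliMean, mul_neg, Finset.sum_neg_distrib]

lemma bernoulliMean_const_mul (p : ℝ) (E : Finset α) (a : ℝ) (f : Finset α → ℝ) :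
    bernoulliMean p E (fun s => a * f s) = a * bernoulliMean p E f := by
  simp only [bernoulliMean, Finset.mul_sum, mul_left_comm a]

lemma bernoulliMean_sum (p : ℝ) (E : Finset α) (I : Finset ι) (f : ι → Finset α → ℝ) :
    bernoulliMean p E (fun s => ∑ i ∈ I, f i s) = ∑ i ∈ I, bernoulliMean p E (f i) := by
  simp only [bernoulliMean, Finset.mul_sum]
  exact Finset.sum_comm

lemma bernoulliMean_const (p : ℝ) (E : Finset α) (a : ℝ) :
    bernoulliMean p E (fun _ => a) = a := by
  rw [bernoulliMean, ← Finset.sum_mul, Finset.sum_pow_mul_eq_add_pow, add_sub_cancel, one_pow,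
    one_mul]

lemma bernoulliMean_congr (p : ℝ) {f g : Finset α → ℝ} (h : ∀ s ⊆ E, f s = g s) :
    bernoulliMean p E f = bernoulliMean p E g :=
  Finset.sum_congr rfl fun s hs => by rw [h s (Finset.mem_powerset.1 hs)]

lemma bernoulliMean_mono (h0 : 0 ≤ p) (h1 : p ≤ 1) {f g : Finset α → ℝ}
    (h : ∀ s ⊆ E, f s ≤ g s) : bernoulliMean p E f ≤ bernoulliMean p E g :=
  Finset.sum_le_sum fun s hs => mul_le_mul_of_nonneg_left (h s (Finset.mem_powerset.1 hs)) <|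
    mul_nonneg (pow_nonneg h0 _) (pow_nonneg (sub_nonneg.2 h1) _)

lemma abs_bernoulliMean_le (h0 : 0 ≤ p) (h1 : p ≤ 1) {f : Finset α → ℝ} {c : ℝ}
    (h : ∀ s ⊆ E, |f s| ≤ c) : |bernoulliMean p E f| ≤ c := by
  rw [abs_le, ← bernoulliMean_const p E (-c)]
  exact ⟨bernoulliMean_mono h0 h1 fun s hs => (abs_le.1 (h s hs)).1,
    (bernoulliMean_mono h0 h1 fun s hs => (abs_le.1 (h s hs)).2).trans_eq
      (bernoulliMean_const p E c)⟩

lemma bernoulliMean_ite (p : ℝ) (E : Finset α) (P : Finset α → Prop) [DecidablePred P] :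
    bernoulliMean p E (fun s => if P s then 1 else 0) = bernoulliProb p E P :=
  bernoulliMean_congr p fun _ _ => by congr

lemma bernoulliProb_congr (p : ℝ) {P Q : Finset α → Prop} (h : ∀ s ⊆ E, P s ↔ Q s) :
    bernoulliProb p E P = bernoulliProb p E Q :=
  bernoulliMean_congr p fun s hs => by simp only [h s hs]

lemma bernoulliProb_true (p : ℝ) (E : Finset α) : bernoulliProb p E (fun _ => True) = 1 := by
  simp only [bernoulliProb, if_true, bernoulliMean_const]

lemma bernoulliProb_false (p : ℝ) (E : Finset α) : bernoulliProb p E (fun _ => False) = 0 := by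
  simp only [bernoulliProb, if_false, bernoulliMean_const]

lemma bernoulliProb_not (p : ℝ) (E : Finset α) (P : Finset α → Prop) :
    bernoulliProb p E (fun s => ¬ P s) = 1 - bernoulliProb p E P := by
  have hsub := bernoulliMean_sub p E (fun _ => 1) fun s => if P s then 1 else 0
  rw [bernoulliMean_const] at hsub
  exact (bernoulliMean_congr p fun s _ => by by_cases h : P s <;> simp [h]).trans hsub

lemma bernoulliProb_nonneg (h0 : 0 ≤ p) (h1 : p ≤ 1) (P : Finset α → Prop) :
    0 ≤ bernoulliProb p E P := by
  rw [← bernoulliMean_const p E 0]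
  exact bernoulliMean_mono h0 h1 fun s _ => by split_ifs <;> norm_num

lemma bernoulliProb_mono (h0 : 0 ≤ p) (h1 : p ≤ 1) {P Q : Finset α → Prop}
    (h : ∀ s ⊆ E, P s → Q s) : bernoulliProb p E P ≤ bernoulliProb p E Q := by
  refine bernoulliMean_mono h0 h1 fun s hs => ?_
  by_cases hP : P s
  · rw [if_pos hP, if_pos (h s hs hP)]
  · rw [if_neg hP]
    split_ifs <;> norm_num

lemma bernoulliProb_le_one (h0 : 0 ≤ p) (h1 : p ≤ 1) (P : Finset α → Prop) :
    bernoulliProb p E P ≤ 1 :=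
  (bernoulliProb_mono h0 h1 fun _ _ _ => trivial).trans_eq (bernoulliProb_true p E)

lemma bernoulliProb_or_le (h0 : 0 ≤ p) (h1 : p ≤ 1) (P Q : Finset α → Prop) :
    bernoulliProb p E (fun s => P s ∨ Q s) ≤ bernoulliProb p E P + bernoulliProb p E Q := by
  rw [bernoulliProb, bernoulliProb, bernoulliProb, ← bernoulliMean_add]
  refine bernoulliMean_mono h0 h1 fun s _ => ?_
  by_cases hP : P s <;> by_cases hQ : Q s <;> simp [hP, hQ]

lemma bernoulliProb_exists_le_card_mul (h0 : 0 ≤ p) (h1 : p ≤ 1) {I : Finset ι}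
    {P : ι → Finset α → Prop} {c : ℝ} (h : ∀ i ∈ I, bernoulliProb p E (P i) ≤ c) :
    bernoulliProb p E (fun s => ∃ i ∈ I, P i s) ≤ I.card * c := by
  induction I using Finset.induction_on with
  | empty => simp [bernoulliProb_false]
  | insert i I hi ih =>
    simp only [Finset.exists_mem_insert]
    refine (bernoulliProb_or_le h0 h1 _ _).trans ((add_le_add (h i (Finset.mem_insert_self i I))
      (ih fun j hj => h j (Finset.mem_insert_of_mem hj))).trans_eq ?_)
    rw [Finset.card_insert_of_notMem hi]
    push_cast
    ring

lemma bernoulliProb_exists_of_unique (p : ℝ) {I : Finset ι} {P : ι → Finset α → Prop}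
    (h : ∀ s ⊆ E, ∀ i ∈ I, ∀ j ∈ I, P i s → P j s → i = j) :
    bernoulliProb p E (fun s => ∃ i ∈ I, P i s) = ∑ i ∈ I, bernoulliProb p E (P i) := by
  simp only [bernoulliProb]
  rw [← bernoulliMean_sum]
  refine bernoulliMean_congr p fun s hs => ?_
  split_ifs with hex
  · obtain ⟨i, hi, hP⟩ := hex
    rw [Finset.sum_eq_single_of_mem i hi fun j hj hji => if_neg fun hPj =>
      hji (h s hs j hj i hi hPj hP), if_pos hP]
  · push Not at hex
    exact (Finset.sum_eq_zero fun i hi => if_neg (hex i hi)).symm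

lemma bernoulliMean_card_filter (p : ℝ) (E : Finset α) (I : Finset ι)
    (P : ι → Finset α → Prop) :
    bernoulliMean p E (fun s => ((I.filter fun i => P i s).card : ℝ))
      = ∑ i ∈ I, bernoulliProb p E (P i) := by
  simp only [bernoulliProb, ← bernoulliMean_sum, Finset.sum_boole]

section DecidableEq

variable [DecidableEq α]

lemma bernoulliMean_insert (p : ℝ) {e : α} (he : e ∉ E) (f : Finset α → ℝ) :
    bernoulliMean p (insert e E) f
      = (1 - p) * bernoulliMean p E f + p * bernoulliMean p E (fun s => f (insert e s)) := by
  unfold bernoulliMean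
  rw [Finset.sum_powerset_insert he, Finset.mul_sum, Finset.mul_sum]
  congr 1
  · refine Finset.sum_congr rfl fun s hs => ?_
    have h := Finset.card_le_card (Finset.mem_powerset.1 hs)
    rw [Finset.card_insert_of_notMem he, Nat.sub_add_comm h, pow_succ]
    ring
  · refine Finset.sum_congr rfl fun s hs => ?_
    have hes : e ∉ s := fun h => he (Finset.mem_powerset.1 hs h)
    rw [Finset.card_insert_of_notMem he, Finset.card_insert_of_notMem hes,
      Nat.add_sub_add_right, pow_succ]
    ring

lemma bernoulliMean_sprinkle {p₁ p₂ : ℝ} (h : 1 - p = (1 - p₁) * (1 - p₂)) (E : Finset α)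
    (f : Finset α → ℝ) :
    bernoulliMean p E f = bernoulliMean p₁ E fun s => bernoulliMean p₂ E fun t => f (s ∪ t) := by
  induction E using Finset.induction_on generalizing f with
  | empty => simp only [bernoulliMean_empty, Finset.union_empty]
  | insert e E he ih =>
    simp only [bernoulliMean_insert _ he, bernoulliMean_add, bernoulliMean_const_mul, ih,
      Finset.insert_union, Finset.union_insert, Finset.insert_idem]
    rw [show p = 1 - (1 - p₁) * (1 - p₂) by linarith]
    ring

/-- The value of `f` at `s` depends only on `s ∩ A`; used with `β = Prop` for events and `β = ℝ`
for random variables. -/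
def DeterminedOn (A : Finset α) (f : Finset α → β) : Prop := ∀ s, f (s ∩ A) = f s

namespace DeterminedOn

variable {γ : Type*} {A B : Finset α} {f : Finset α → β} {g : Finset α → γ}

lemma insert_of_notMem (hf : DeterminedOn A f) {e : α} (he : e ∉ A) (s : Finset α) :
    f (insert e s) = f s := by
  rw [← hf (insert e s), Finset.insert_inter_of_notMem he, hf]

lemma comp_insert (hf : DeterminedOn A f) (e : α) : DeterminedOn A fun s => f (insert e s) := by
  intro s
  change f (insert e (s ∩ A)) = f (insert e s)
  rw [← hf (insert e (s ∩ A)), ← hf (insert e s)]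
  congr 1
  grind

lemma mono (hf : DeterminedOn A f) (h : A ⊆ B) : DeterminedOn B f := fun s => by
  rw [← hf (s ∩ B), ← hf s, Finset.inter_assoc, Finset.inter_eq_right.2 h]

lemma comp (hf : DeterminedOn A f) (φ : β → γ) : DeterminedOn A fun s => φ (f s) :=
  fun s => congrArg φ (hf s)

lemma map₂ {δ : Type*} (hf : DeterminedOn A f) (hg : DeterminedOn B g) (φ : β → γ → δ) :
    DeterminedOn (A ∪ B) fun s => φ (f s) (g s) := fun s =>
  congrArg₂ φ (hf.mono Finset.subset_union_left s) (hg.mono Finset.subset_union_right s)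

lemma prod {I : Finset ι} {A : ι → Finset α} {f : ι → Finset α → ℝ}
    (hf : ∀ i ∈ I, DeterminedOn (A i) (f i)) :
    DeterminedOn (I.biUnion A) fun s => ∏ i ∈ I, f i s := fun s =>
  Finset.prod_congr rfl fun i hi => (hf i hi).mono (Finset.subset_biUnion_of_mem A hi) s

end DeterminedOn

lemma determinedOn_mem (e : α) : DeterminedOn {e} fun s => e ∈ s := fun s => by
  simp only [Finset.mem_inter, Finset.mem_singleton, and_true]

lemma bernoulliMean_mul_of_disjoint (p : ℝ) (E : Finset α) {A B : Finset α} (hAB : Disjoint A B)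
    {f g : Finset α → ℝ} (hf : DeterminedOn A f) (hg : DeterminedOn B g) :
    bernoulliMean p E (fun s => f s * g s) = bernoulliMean p E f * bernoulliMean p E g := by
  induction E using Finset.induction_on generalizing f g with
  | empty => simp only [bernoulliMean_empty]
  | insert e E he ih =>
    simp only [bernoulliMean_insert _ he]
    by_cases hA : e ∈ A
    · simp only [hg.insert_of_notMem (Finset.disjoint_left.1 hAB hA)]
      rw [ih hf hg, ih (hf.comp_insert e) hg]
      ring
    · simp only [hf.insert_of_notMem hA]
      rw [ih hf hg, ih hf (hg.comp_insert e)]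
      ring

lemma bernoulliMean_prod_of_disjoint (p : ℝ) (E : Finset α) {I : Finset ι} {A : ι → Finset α}
    {f : ι → Finset α → ℝ} (hf : ∀ i ∈ I, DeterminedOn (A i) (f i))
    (hA : (I : Set ι).PairwiseDisjoint A) :
    bernoulliMean p E (fun s => ∏ i ∈ I, f i s) = ∏ i ∈ I, bernoulliMean p E (f i) := by
  induction I using Finset.induction_on with
  | empty => simp only [Finset.prod_empty, bernoulliMean_const]
  | insert i I hi ih =>
    rw [Finset.coe_insert, Set.pairwiseDisjoint_insert_of_notMem (mt Finset.mem_coe.1 hi)] at hA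
    have hfI : ∀ j ∈ I, DeterminedOn (A j) (f j) := fun j hj => hf j (Finset.mem_insert_of_mem hj)
    simp only [Finset.prod_insert hi]
    rw [← ih hfI hA.1]
    exact bernoulliMean_mul_of_disjoint p E ((Finset.disjoint_biUnion_right _ _ _).2 hA.2)
      (hf i (Finset.mem_insert_self i I)) (DeterminedOn.prod hfI)

lemma bernoulliProb_and_of_disjoint (p : ℝ) (E : Finset α) {A B : Finset α} (hAB : Disjoint A B)
    {P Q : Finset α → Prop} (hP : DeterminedOn A P) (hQ : DeterminedOn B Q) :
    bernoulliProb p E (fun s => P s ∧ Q s) = bernoulliProb p E P * bernoulliProb p E Q := by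
  rw [bernoulliProb, bernoulliProb, bernoulliProb, ← bernoulliMean_mul_of_disjoint p E hAB
    (hP.comp fun P => if P then (1 : ℝ) else 0) (hQ.comp fun P => if P then (1 : ℝ) else 0)]
  exact bernoulliMean_congr p fun s _ => by
    by_cases h : P s <;> by_cases h' : Q s <;> simp [h, h']

lemma bernoulliProb_forall_of_disjoint (p : ℝ) (E : Finset α) {I : Finset ι} {A : ι → Finset α}
    {P : ι → Finset α → Prop} (hP : ∀ i ∈ I, DeterminedOn (A i) (P i))
    (hA : (I : Set ι).PairwiseDisjoint A) :
    bernoulliProb p E (fun s => ∀ i ∈ I, P i s) = ∏ i ∈ I, bernoulliProb p E (P i) := by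
  simp only [bernoulliProb]
  rw [← bernoulliMean_prod_of_disjoint p E
    (fun i hi => (hP i hi).comp fun P => if P then (1 : ℝ) else 0) hA]
  exact bernoulliMean_congr p fun s _ => by
    rw [Finset.prod_ite_zero, Finset.prod_const_one]
    congr

lemma bernoulliProb_filter_eq (p : ℝ) (E : Finset α) {I J : Finset ι} (hJ : J ⊆ I)
    {A : ι → Finset α} {P : ι → Finset α → Prop} {t : ℝ}
    (hP : ∀ i ∈ I, DeterminedOn (A i) (P i)) (hA : (I : Set ι).PairwiseDisjoint A)
    (ht : ∀ i ∈ I, bernoulliProb p E (P i) = t) :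
    bernoulliProb p E (fun s => I.filter (fun i => P i s) = J)
      = t ^ J.card * (1 - t) ^ (I.card - J.card) := by
  have hterm : ∀ i ∈ I,
      bernoulliProb p E (fun s => P i s ↔ i ∈ J) = if i ∈ J then t else 1 - t := by
    intro i hi
    by_cases hiJ : i ∈ J
    · simp only [hiJ, iff_true, if_true, ht i hi]
    · simp only [hiJ, iff_false, if_false, bernoulliProb_not, ht i hi]
  calc bernoulliProb p E (fun s => I.filter (fun i => P i s) = J)
      = bernoulliProb p E (fun s => ∀ i ∈ I, (P i s ↔ i ∈ J)) :=
        bernoulliProb_congr p fun s _ => by grind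
    _ = ∏ i ∈ I, if i ∈ J then t else 1 - t := by
        rw [bernoulliProb_forall_of_disjoint p E
          (fun i hi => (hP i hi).comp fun P => (P ↔ i ∈ J)) hA, Finset.prod_congr rfl hterm]
    _ = t ^ J.card * (1 - t) ^ (I.card - J.card) := by
        rw [Finset.prod_ite, Finset.prod_const, Finset.prod_const, Finset.filter_mem_eq_inter,
          Finset.inter_eq_right.2 hJ, Finset.filter_notMem_eq_sdiff, Finset.card_sdiff_of_subset hJ]

lemma bernoulliProb_card_filter_eq (p : ℝ) (E : Finset α) {I : Finset ι}
    {A : ι → Finset α} {P : ι → Finset α → Prop} {t : ℝ}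
    (hP : ∀ i ∈ I, DeterminedOn (A i) (P i)) (hA : (I : Set ι).PairwiseDisjoint A)
    (ht : ∀ i ∈ I, bernoulliProb p E (P i) = t) (k : ℕ) :
    bernoulliProb p E (fun s => (I.filter fun i => P i s).card = k)
      = I.card.choose k * t ^ k * (1 - t) ^ (I.card - k) := by
  calc bernoulliProb p E (fun s => (I.filter fun i => P i s).card = k)
      = bernoulliProb p E (fun s => ∃ J ∈ I.powersetCard k, I.filter (fun i => P i s) = J) :=
        bernoulliProb_congr p fun s _ => by
          simp only [exists_eq_right', Finset.mem_powersetCard, Finset.filter_subset, true_and]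
    _ = ∑ J ∈ I.powersetCard k, bernoulliProb p E (fun s => I.filter (fun i => P i s) = J) :=
        bernoulliProb_exists_of_unique p fun s _ J _ K _ hJ hK => hJ.symm.trans hK
    _ = ∑ J ∈ I.powersetCard k, t ^ k * (1 - t) ^ (I.card - k) :=
        Finset.sum_congr rfl fun J hJ => by
          obtain ⟨hJI, rfl⟩ := Finset.mem_powersetCard.1 hJ
          exact bernoulliProb_filter_eq p E hJI hP hA ht
    _ = I.card.choose k * t ^ k * (1 - t) ^ (I.card - k) := by
        rw [Finset.sum_const, Finset.card_powersetCard, nsmul_eq_mul, mul_assoc]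

end DecidableEq

lemma bernoulliProb_mem (p : ℝ) {e : α} (he : e ∈ E) :
    bernoulliProb p E (fun s => e ∈ s) = p := by
  have habsent : bernoulliProb p (E.erase e) (fun s => e ∈ s) = 0 :=
    (bernoulliProb_congr p fun s hs => iff_false_intro fun h =>
      Finset.notMem_erase e E (hs h)).trans (bernoulliProb_false p _)
  rw [← Finset.insert_erase he, bernoulliProb, bernoulliMean_insert p (Finset.notMem_erase e E),
    ← bernoulliProb, habsent]
  simp only [Finset.mem_insert_self, if_true, bernoulliMean_const]
  ring

lemma bernoulliProb_subset (p : ℝ) {Q : Finset α} (hQ : Q ⊆ E) :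
    bernoulliProb p E (fun s => Q ⊆ s) = p ^ Q.card := by
  have hdisj : (Q : Set α).PairwiseDisjoint fun e => ({e} : Finset α) :=
    fun _ _ _ _ h => Finset.disjoint_singleton.2 h
  exact (bernoulliProb_forall_of_disjoint p E (fun e _ => determinedOn_mem e) hdisj).trans
    (Finset.prod_eq_pow_card fun e he => bernoulliProb_mem p (hQ he))

lemma card_filter_card_le_le_exp (E : Finset α) (m : ℝ) {x : ℝ} (hx0 : 0 < x) (hx1 : x ≤ 1) :
    ((E.powerset.filter fun F => (F.card : ℝ) ≤ m).card : ℝ)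
      ≤ Real.exp (x * E.card - m * Real.log x) := by
  have hweight : ∀ F ∈ E.powerset.filter (fun F => (F.card : ℝ) ≤ m),
      Real.exp (m * Real.log x) ≤ x ^ F.card := by
    intro F hF
    rw [← Real.exp_log (pow_pos hx0 _), Real.exp_le_exp, Real.log_pow]
    exact mul_le_mul_of_nonpos_right (Finset.mem_filter.1 hF).2 (Real.log_nonpos hx0.le hx1)
  rw [Real.exp_sub, le_div_iff₀ (Real.exp_pos _)]
  calc ((E.powerset.filter fun F => (F.card : ℝ) ≤ m).card : ℝ) * Real.exp (m * Real.log x)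
      ≤ ∑ F ∈ E.powerset.filter (fun F => (F.card : ℝ) ≤ m), x ^ F.card := by
        rw [← nsmul_eq_mul]
        exact Finset.card_nsmul_le_sum _ _ _ hweight
    _ ≤ ∑ F ∈ E.powerset, x ^ F.card :=
        Finset.sum_le_sum_of_subset_of_nonneg (Finset.filter_subset _ _) fun F _ _ =>
          (pow_pos hx0 _).le
    _ = (x + 1) ^ E.card := by simpa using Finset.sum_pow_mul_eq_add_pow x 1 E
    _ ≤ Real.exp x ^ E.card := by
        gcongr
        exact Real.add_one_le_exp x
    _ = Real.exp (x * E.card) := by rw [mul_comm, Real.exp_nat_mul]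

end BernoulliSubsets

/-! ### Bounded differences -/

section BoundedDifferences

variable {α : Type*} {p c : ℝ} {E : Finset α}

lemma exp_le_one_add_add_sq {x : ℝ} (hx : |x| ≤ c) (hc : c ≤ 1) :
    Real.exp x ≤ 1 + x + c ^ 2 := by
  have hexp := (abs_le.1 (Real.abs_exp_sub_one_sub_id_le (hx.trans hc))).2
  have hsq : x ^ 2 ≤ c ^ 2 := by
    rw [← sq_abs]
    gcongr
  linarith

/-- Centred at its mean, each value of a two-valued random variable is off by at most the distance
between the two values. -/
lemma two_point_mean_exp_le {a b : ℝ} (h0 : 0 ≤ p) (h1 : p ≤ 1) (hab : |b - a| ≤ c) (hc : c ≤ 1) :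
    (1 - p) * Real.exp a + p * Real.exp b ≤ Real.exp ((1 - p) * a + p * b + c ^ 2) := by
  set m := (1 - p) * a + p * b with hm
  have hp : 0 ≤ 1 - p := sub_nonneg.2 h1
  have ha : |a - m| ≤ c := by
    rw [show a - m = -(p * (b - a)) by rw [hm]; ring, abs_neg, abs_mul, abs_of_nonneg h0]
    exact (mul_le_of_le_one_left (abs_nonneg _) h1).trans hab
  have hb : |b - m| ≤ c := by
    rw [show b - m = (1 - p) * (b - a) by rw [hm]; ring, abs_mul, abs_of_nonneg hp]
    exact (mul_le_of_le_one_left (abs_nonneg _) (by linarith)).trans hab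
  have hcenter : ∀ x, Real.exp x = Real.exp m * Real.exp (x - m) := fun x => by
    rw [← Real.exp_add, add_sub_cancel]
  calc (1 - p) * Real.exp a + p * Real.exp b
      = Real.exp m * ((1 - p) * Real.exp (a - m) + p * Real.exp (b - m)) := by
        rw [hcenter a, hcenter b]
        ring
    _ ≤ Real.exp m * ((1 - p) * (1 + (a - m) + c ^ 2) + p * (1 + (b - m) + c ^ 2)) := by
        gcongr
        · exact exp_le_one_add_add_sq ha hc
        · exact exp_le_one_add_add_sq hb hc
    _ = Real.exp m * (c ^ 2 + 1) := by rw [hm]; ring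
    _ ≤ Real.exp m * Real.exp (c ^ 2) := by
        gcongr
        exact Real.add_one_le_exp _
    _ = Real.exp (m + c ^ 2) := (Real.exp_add _ _).symm

variable [DecidableEq α]

lemma abs_bernoulliMean_insert_sub_le (h0 : 0 ≤ p) (h1 : p ≤ 1) {f : Finset α → ℝ} {e : α}
    (hf : ∀ s ⊆ E, |f (insert e s) - f s| ≤ c) :
    |bernoulliMean p E (fun s => f (insert e s)) - bernoulliMean p E f| ≤ c := by
  rw [← bernoulliMean_sub]
  exact abs_bernoulliMean_le h0 h1 hf

lemma bernoulliMean_exp_le (h0 : 0 ≤ p) (h1 : p ≤ 1) (hc : c ≤ 1) {f : Finset α → ℝ}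
    (hf : ∀ e ∈ E, ∀ s ⊆ E, |f (insert e s) - f s| ≤ c) :
    bernoulliMean p E (fun s => Real.exp (f s))
      ≤ Real.exp (bernoulliMean p E f + c ^ 2 * E.card) := by
  induction E using Finset.induction_on generalizing f with
  | empty => simp [bernoulliMean_empty]
  | insert e E he ih =>
    have hE : ∀ s ⊆ E, s ⊆ insert e E := fun s hs => hs.trans (Finset.subset_insert e E)
    have hwithout := ih (f := f) fun e' he' s hs => hf e' (Finset.mem_insert_of_mem he') s (hE s hs)
    have hwith := ih (f := fun s => f (insert e s)) fun e' he' s hs => by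
      rw [Finset.insert_comm]
      exact hf e' (Finset.mem_insert_of_mem he') _ (Finset.insert_subset_insert e hs)
    have hdiff := abs_bernoulliMean_insert_sub_le h0 h1 (f := f) fun s hs =>
      hf e (Finset.mem_insert_self e E) s (hE s hs)
    rw [bernoulliMean_insert p he, bernoulliMean_insert p he, Finset.card_insert_of_notMem he]
    rw [Real.exp_add] at hwithout hwith
    set a := bernoulliMean p E f
    set b := bernoulliMean p E fun s => f (insert e s)
    set K := Real.exp (c ^ 2 * E.card)
    calc _ ≤ (1 - p) * (Real.exp a * K) + p * (Real.exp b * K) :=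
          add_le_add (mul_le_mul_of_nonneg_left hwithout (sub_nonneg.2 h1))
            (mul_le_mul_of_nonneg_left hwith h0)
      _ = ((1 - p) * Real.exp a + p * Real.exp b) * K := by ring
      _ ≤ Real.exp ((1 - p) * a + p * b + c ^ 2) * K := by
        gcongr
        exact two_point_mean_exp_le h0 h1 hdiff hc
      _ = Real.exp ((1 - p) * a + p * b + c ^ 2 * (E.card + 1 : ℕ)) := by
        rw [← Real.exp_add]
        push_cast
        ring_nf

lemma bernoulliProb_mean_add_le_le {l a : ℝ} (h0 : 0 ≤ p) (h1 : p ≤ 1) (hl : 0 ≤ l)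
    (hc : l * c ≤ 1) {f : Finset α → ℝ} (hf : ∀ e ∈ E, ∀ s ⊆ E, |f (insert e s) - f s| ≤ c) :
    bernoulliProb p E (fun s => bernoulliMean p E f + a ≤ f s)
      ≤ Real.exp ((l * c) ^ 2 * E.card - l * a) := by
  set m := bernoulliMean p E f with hm
  have hexp := bernoulliMean_exp_le h0 h1 hc (E := E) (f := fun s => l * f s) fun e he s hs => by
    rw [← mul_sub, abs_mul, abs_of_nonneg hl]
    exact mul_le_mul_of_nonneg_left (hf e he s hs) hl
  rw [bernoulliMean_const_mul, ← hm] at hexp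
  calc bernoulliProb p E (fun s => m + a ≤ f s)
      ≤ bernoulliMean p E (fun s => Real.exp (-(l * (m + a))) * Real.exp (l * f s)) := by
        refine bernoulliMean_mono h0 h1 fun s _ => ?_
        rw [← Real.exp_add]
        split_ifs with hs
        · exact Real.one_le_exp (by linarith [mul_le_mul_of_nonneg_left hs hl])
        · exact (Real.exp_pos _).le
    _ ≤ Real.exp (-(l * (m + a))) * Real.exp (l * m + (l * c) ^ 2 * E.card) := by
        rw [bernoulliMean_const_mul]
        gcongr
    _ = Real.exp ((l * c) ^ 2 * E.card - l * a) := by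
        rw [← Real.exp_add]
        ring_nf

lemma bernoulliProb_le_abs_sub_mean_le {l a : ℝ} (h0 : 0 ≤ p) (h1 : p ≤ 1) (hl : 0 ≤ l)
    (hc : l * c ≤ 1) {f : Finset α → ℝ} (hf : ∀ e ∈ E, ∀ s ⊆ E, |f (insert e s) - f s| ≤ c) :
    bernoulliProb p E (fun s => a ≤ |f s - bernoulliMean p E f|)
      ≤ 2 * Real.exp ((l * c) ^ 2 * E.card - l * a) := by
  have hupper := bernoulliProb_mean_add_le_le (a := a) h0 h1 hl hc hf
  have hlower := bernoulliProb_mean_add_le_le (a := a) h0 h1 hl hc (f := fun s => - f s)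
    fun e he s hs => by
      rw [neg_sub_neg, abs_sub_comm]
      exact hf e he s hs
  rw [bernoulliMean_neg] at hlower
  rw [two_mul]
  refine le_trans (bernoulliProb_mono h0 h1 fun s _ hs => ?_)
    ((bernoulliProb_or_le h0 h1 _ _).trans (add_le_add hupper hlower))
  exact (le_abs.1 hs).imp (fun h => by linarith) fun h => by linarith

end BoundedDifferences

/-! ### Branches of a graph of large girth -/

section Branches

variable {V : Type*} {G H H' : SimpleGraph V} {r : ℕ} {x y z : V}

lemma path_eq_of_lt_girth {w w' : G.Walk x y} (hw : w.IsPath) (hw' : w'.IsPath)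
    (h : w.length + w'.length < G.girth) : w = w' := by
  by_contra hne
  obtain ⟨_, _, _, c, hc, hlen⟩ := hw.exists_isCycle_length_le_add_of_ne hw' hne
  exact absurd (hlen.trans_lt h) (SimpleGraph.girth_le_length hc).not_gt

/-- The directed edge from `x` to `y` can be continued by `r` further edges of `H`, no two
consecutive ones being equal. -/
def Survives (H : SimpleGraph V) : ℕ → V → V → Prop
  | 0, _, _ => True
  | r + 1, x, y => ∃ z, z ≠ x ∧ H.Adj y z ∧ Survives H r y z

lemma Survives.mono (h : H ≤ H') : ∀ {r : ℕ} {x y : V}, Survives H r x y → Survives H' r x y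
  | 0, _, _, _ => trivial
  | _ + 1, _, _, ⟨z, hz, hyz, hs⟩ => ⟨z, hz, h hyz, hs.mono h⟩

lemma Survives.of_succ : ∀ {r : ℕ} {x y : V}, Survives H (r + 1) x y → Survives H r x y
  | 0, _, _, _ => trivial
  | _ + 1, _, _, ⟨z, hz, hyz, hs⟩ => ⟨z, hz, hyz, hs.of_succ⟩

lemma Survives.of_le {j : ℕ} (h : j ≤ r) (hs : Survives H r x y) : Survives H j x y := by
  induction h with
  | refl => exact hs
  | step _ ih => exact ih hs.of_succ

/-- The branch of `G` at the directed edge from `x` to `y`, cut off at depth `r`: the vertices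
reachable from `y` by a path of length at most `r` avoiding `x`. -/
def branch (G : SimpleGraph V) (r : ℕ) (x y : V) : Set V :=
  {u | ∃ w : G.Walk y u, w.IsPath ∧ x ∉ w.support ∧ w.length ≤ r}

lemma self_mem_branch (hxy : x ≠ y) : y ∈ branch G r x y :=
  ⟨.nil, .nil, by simpa using hxy, Nat.zero_le r⟩

lemma notMem_branch (G : SimpleGraph V) (r : ℕ) (x y : V) : x ∉ branch G r x y :=
  fun ⟨w, _, hx, _⟩ => hx w.end_mem_support

lemma notMem_support_of_lt_girth {u : V} (hxy : G.Adj x y) (hzx : z ≠ x) (hyz : G.Adj y z)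
    {w : G.Walk z u} (hw : w.IsPath) (hy : y ∉ w.support) (h : w.length + 2 < G.girth) :
    x ∉ w.support := fun hx => by
  have hlong : (SimpleGraph.Walk.cons hyz (w.takeUntil x hx)).IsPath :=
    (hw.takeUntil hx).cons fun h => hy (w.support_takeUntil_subset_support hx h)
  have hshort : (SimpleGraph.Walk.cons hxy.symm SimpleGraph.Walk.nil).IsPath := by
    simp [hxy.ne.symm]
  have hlen := w.length_takeUntil_le_length hx
  injection path_eq_of_lt_girth hlong hshort (by simp; lia) with _ hz
  exact hzx hz

lemma branch_subset_branch_succ (hxy : G.Adj x y) (hzx : z ≠ x) (hyz : G.Adj y z)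
    (h : r + 2 < G.girth) : branch G r y z ⊆ branch G (r + 1) x y := by
  rintro u ⟨w, hw, hy, hlen⟩
  refine ⟨.cons hyz w, hw.cons hy, ?_, by simpa using hlen⟩
  rw [SimpleGraph.Walk.support_cons, List.mem_cons, not_or]
  exact ⟨hxy.ne, notMem_support_of_lt_girth hxy hzx hyz hw hy (by lia)⟩

lemma disjoint_branch {z' : V} (hne : z ≠ z') (hz : G.Adj y z) (hz' : G.Adj y z')
    (h : 2 * r + 2 < G.girth) : Disjoint (branch G r y z) (branch G r y z') := by
  rw [Set.disjoint_left]
  rintro u ⟨w, hw, hy, hlen⟩ ⟨w', hw', hy', hlen'⟩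
  injection path_eq_of_lt_girth (hw.cons (h := hz) hy) (hw'.cons (h := hz') hy')
    (by simp; lia) with _ hzz
  exact hne hzz

/-- The subgraph of `G` whose edges are those in `s`. -/
def openSubgraph (G : SimpleGraph V) (s : Finset (Sym2 V)) : SimpleGraph V :=
  G ⊓ SimpleGraph.fromEdgeSet ↑s

lemma openSubgraph_adj {s : Finset (Sym2 V)} :
    (openSubgraph G s).Adj x y ↔ G.Adj x y ∧ s(x, y) ∈ s := by
  simp only [openSubgraph, SimpleGraph.inf_adj, SimpleGraph.fromEdgeSet_adj, Finset.mem_coe]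
  exact ⟨fun h => ⟨h.1, h.2.1⟩, fun h => ⟨h.1, h.2, h.1.ne⟩⟩

lemma openSubgraph_le (G : SimpleGraph V) (s : Finset (Sym2 V)) : openSubgraph G s ≤ G :=
  inf_le_left

lemma openSubgraph_mono (G : SimpleGraph V) {s t : Finset (Sym2 V)} (h : s ⊆ t) :
    openSubgraph G s ≤ openSubgraph G t := fun _ _ hxy => by
  rw [openSubgraph_adj] at *
  exact ⟨hxy.1, h hxy.2⟩

variable [Fintype V]

/-- The edges between vertices of a branch. -/
def branchEdges (G : SimpleGraph V) (r : ℕ) (x y : V) : Finset (Sym2 V) :=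
  Finset.univ.filter fun e => ∀ v ∈ e, v ∈ branch G r x y

lemma mem_branchEdges {e : Sym2 V} : e ∈ branchEdges G r x y ↔ ∀ v ∈ e, v ∈ branch G r x y := by
  simp only [branchEdges, Finset.mem_filter, Finset.mem_univ, true_and]

lemma notMem_branchEdges (G : SimpleGraph V) (r : ℕ) (y z : V) :
    s(y, z) ∉ branchEdges G r y z := fun h =>
  notMem_branch G r y z (mem_branchEdges.1 h y (Sym2.mem_mk_left y z))

lemma insert_branchEdges_subset (hxy : G.Adj x y) (hzx : z ≠ x) (hyz : G.Adj y z)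
    (h : r + 2 < G.girth) :
    insert s(y, z) (branchEdges G r y z) ⊆ branchEdges G (r + 1) x y := by
  have hsub := branch_subset_branch_succ hxy hzx hyz h
  refine Finset.insert_subset (mem_branchEdges.2 fun v hv => ?_) fun e he =>
    mem_branchEdges.2 fun v hv => hsub (mem_branchEdges.1 he v hv)
  rcases Sym2.mem_iff.1 hv with rfl | rfl
  · exact self_mem_branch hxy.ne
  · exact hsub (self_mem_branch hyz.ne)

lemma pairwiseDisjoint_insert_branchEdges (h : 2 * r + 2 < G.girth) (y : V) :
    (G.neighborSet y).PairwiseDisjoint fun z => insert s(y, z) (branchEdges G r y z) := by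
  have hends : ∀ z, G.Adj y z → ∀ e ∈ insert s(y, z) (branchEdges G r y z),
      (∃ v ∈ e, v ∈ branch G r y z) ∧ ∀ v ∈ e, v = y ∨ v ∈ branch G r y z := by
    intro z hz e he
    rcases Finset.mem_insert.1 he with rfl | he
    · refine ⟨⟨z, Sym2.mem_mk_right y z, self_mem_branch hz.ne⟩, fun v hv => ?_⟩
      rcases Sym2.mem_iff.1 hv with rfl | rfl
      · exact .inl rfl
      · exact .inr (self_mem_branch hz.ne)
    · have he := mem_branchEdges.1 he
      exact ⟨⟨e.out.1, Sym2.out_fst_mem e, he _ (Sym2.out_fst_mem e)⟩, fun v hv => .inr (he v hv)⟩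
  intro z hz z' hz' hne
  refine Finset.disjoint_left.2 fun e he he' => ?_
  obtain ⟨v, hv, hvb⟩ := (hends z hz e he).1
  rcases (hends z' hz' e he').2 v hv with rfl | hvb'
  · exact notMem_branch _ _ _ _ hvb
  · exact Set.disjoint_left.1 (disjoint_branch hne hz hz' h) hvb hvb'

lemma determinedOn_survives : ∀ {r : ℕ} {x y : V}, G.Adj x y → r + 2 < G.girth →
    DeterminedOn (branchEdges G r x y) fun s => Survives (openSubgraph G s) r x y
  | 0, _, _, _, _ => fun _ => rfl
  | r + 1, x, y, hxy, hg => fun s => by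
    refine propext (exists_congr fun z => and_congr_right fun hz => ?_)
    rw [openSubgraph_adj, openSubgraph_adj, Finset.mem_inter]
    by_cases hyz : G.Adj y z
    · have hsub := insert_branchEdges_subset hxy hz hyz (r := r) (by lia)
      have hedge := hsub (Finset.mem_insert_self _ _)
      have hsurv := (determinedOn_survives (r := r) hyz (by lia)).mono
        ((Finset.subset_insert _ _).trans hsub) s
      simp only [hyz, hedge, and_true, true_and, hsurv]
    · simp only [hyz, false_and]

/-- The neighbours of `v` in `H` whose branch survives to depth `r`. -/
def aliveNeighbors (H : SimpleGraph V) (r : ℕ) (v : V) : Finset V :=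
  Finset.univ.filter fun y => H.Adj v y ∧ Survives H r v y

lemma mem_aliveNeighbors :
    y ∈ aliveNeighbors H r x ↔ H.Adj x y ∧ Survives H r x y := by
  simp only [aliveNeighbors, Finset.mem_filter, Finset.mem_univ, true_and]

lemma aliveNeighbors_mono (h : H ≤ H') (r : ℕ) (v : V) :
    aliveNeighbors H r v ⊆ aliveNeighbors H' r v := fun _ hy => by
  rw [mem_aliveNeighbors] at *
  exact ⟨h hy.1, hy.2.mono h⟩

lemma aliveNeighbors_subset_neighborFinset (h : H ≤ G) (r : ℕ) (v : V) :
    aliveNeighbors H r v ⊆ G.neighborFinset v := fun _ hy =>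
  (G.mem_neighborFinset v _).2 (h (mem_aliveNeighbors.1 hy).1)

lemma filter_mem_aliveNeighbors (h : H ≤ G) (r : ℕ) (v : V)
    [DecidablePred (· ∈ aliveNeighbors H r v)] :
    (G.neighborFinset v).filter (· ∈ aliveNeighbors H r v) = aliveNeighbors H r v := by
  ext y
  rw [Finset.mem_filter]
  exact and_iff_right_of_imp fun hy => aliveNeighbors_subset_neighborFinset h r v hy

lemma determinedOn_mem_aliveNeighbors (hyz : G.Adj y z) (hg : r + 2 < G.girth) :
    DeterminedOn (insert s(y, z) (branchEdges G r y z))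
      fun s => z ∈ aliveNeighbors (openSubgraph G s) r y := by
  simp only [mem_aliveNeighbors, openSubgraph_adj, hyz, true_and]
  exact (determinedOn_mem s(y, z)).map₂ (determinedOn_survives hyz hg) And

end Branches

section BranchProbabilities

variable {V : Type} [Fintype V] {G : SimpleGraph V} {r d : ℕ} {x y z : V}

lemma mem_edgeFinset' : s(x, y) ∈ edgeFinset' G ↔ G.Adj x y := by
  simp only [edgeFinset', Finset.mem_filter, Finset.mem_univ, true_and, SimpleGraph.mem_edgeSet]

lemma fromEdgeSet_eq_openSubgraph {s : Finset (Sym2 V)} (hs : s ⊆ edgeFinset' G) :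
    SimpleGraph.fromEdgeSet (↑s : Set (Sym2 V)) = openSubgraph G s := by
  ext x y
  rw [openSubgraph_adj, SimpleGraph.fromEdgeSet_adj, Finset.mem_coe]
  exact ⟨fun h => ⟨mem_edgeFinset'.1 (hs h.1), h.1⟩, fun h => ⟨h.2, h.1.ne⟩⟩

lemma percProb_eq_bernoulliProb (G : SimpleGraph V) (p : ℝ) (P : SimpleGraph V → Prop) :
    percProb G p P = bernoulliProb p (edgeFinset' G) fun s => P (openSubgraph G s) :=
  bernoulliProb_congr p fun _ hs => by rw [fromEdgeSet_eq_openSubgraph hs]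

/-- The probability that a branch of the percolation on the `d`-regular tree dies out before
depth `r`. -/
def extinctionProb (d : ℕ) (p : ℝ) : ℕ → ℝ
  | 0 => 0
  | r + 1 => (1 - p + p * extinctionProb d p r) ^ (d - 1)

lemma bernoulliProb_mem_aliveNeighbors (p : ℝ) (hyz : G.Adj y z) (hg : r + 2 < G.girth) :
    bernoulliProb p (edgeFinset' G) (fun s => z ∈ aliveNeighbors (openSubgraph G s) r y)
      = p * bernoulliProb p (edgeFinset' G) (fun s => Survives (openSubgraph G s) r y z) := by
  have hindep := bernoulliProb_and_of_disjoint p (edgeFinset' G)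
    (Finset.disjoint_singleton_left.2 (notMem_branchEdges G r y z))
    (determinedOn_mem s(y, z)) (determinedOn_survives hyz hg)
  rw [bernoulliProb_mem p (mem_edgeFinset'.2 hyz)] at hindep
  simpa only [mem_aliveNeighbors, openSubgraph_adj, hyz, true_and] using hindep

lemma bernoulliProb_survives (hG : G.IsRegularOfDegree d) (p : ℝ) :
    ∀ {r : ℕ} {x y : V}, G.Adj x y → 2 * r + 2 < G.girth →
      bernoulliProb p (edgeFinset' G) (fun s => Survives (openSubgraph G s) r x y)
        = 1 - extinctionProb d p r
  | 0, _, _, _, _ => by simp only [Survives, bernoulliProb_true, extinctionProb, sub_zero]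
  | r + 1, x, y, hxy, hg => by
    have hadj : ∀ z ∈ (G.neighborFinset y).erase x, G.Adj y z := fun z hz =>
      (G.mem_neighborFinset y z).1 (Finset.mem_of_mem_erase hz)
    have hterm : ∀ z ∈ (G.neighborFinset y).erase x,
        bernoulliProb p (edgeFinset' G) (fun s => z ∉ aliveNeighbors (openSubgraph G s) r y)
          = 1 - p + p * extinctionProb d p r := fun z hz => by
      rw [bernoulliProb_not, bernoulliProb_mem_aliveNeighbors p (hadj z hz) (by lia),
        bernoulliProb_survives hG p (hadj z hz) (by lia)]
      ring
    have hsurv : ∀ s ⊆ edgeFinset' G, Survives (openSubgraph G s) (r + 1) x y ↔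
        ¬ ∀ z ∈ (G.neighborFinset y).erase x, z ∉ aliveNeighbors (openSubgraph G s) r y := by
      intro s _
      simp only [Survives, Finset.mem_erase, SimpleGraph.mem_neighborFinset, mem_aliveNeighbors]
      push Not
      exact exists_congr fun z =>
        ⟨fun h => ⟨⟨h.1, openSubgraph_le G s h.2.1⟩, h.2⟩, fun h => ⟨h.1.1, h.2⟩⟩
    rw [bernoulliProb_congr p hsurv, bernoulliProb_not, bernoulliProb_forall_of_disjoint p _
      (fun z hz => (determinedOn_mem_aliveNeighbors (hadj z hz) (by lia)).comp Not)
      ((pairwiseDisjoint_insert_branchEdges (by lia) y).subset hadj),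
      Finset.prod_congr rfl hterm, Finset.prod_const,
      Finset.card_erase_of_mem ((G.mem_neighborFinset y x).2 hxy.symm),
      SimpleGraph.card_neighborFinset_eq_degree, hG.degree_eq, extinctionProb]

lemma bernoulliProb_mem_aliveNeighbors_eq (hG : G.IsRegularOfDegree d) (p : ℝ)
    (hg : 2 * r + 2 < G.girth) (hyz : G.Adj y z) :
    bernoulliProb p (edgeFinset' G) (fun s => z ∈ aliveNeighbors (openSubgraph G s) r y)
      = p * (1 - extinctionProb d p r) := by
  rw [bernoulliProb_mem_aliveNeighbors p hyz (by lia), bernoulliProb_survives hG p hyz hg]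

lemma bernoulliMean_card_aliveNeighbors (hG : G.IsRegularOfDegree d) (p : ℝ)
    (hg : 2 * r + 2 < G.girth) (v : V) :
    bernoulliMean p (edgeFinset' G) (fun s => ((aliveNeighbors (openSubgraph G s) r v).card : ℝ))
      = d * (p * (1 - extinctionProb d p r)) := by
  have hcard := bernoulliMean_card_filter p (edgeFinset' G) (G.neighborFinset v)
    fun z s => z ∈ aliveNeighbors (openSubgraph G s) r v
  simp only [filter_mem_aliveNeighbors (openSubgraph_le G _)] at hcard
  rw [hcard, Finset.sum_congr rfl fun z hz => bernoulliProb_mem_aliveNeighbors_eq hG p hg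
    ((G.mem_neighborFinset v z).1 hz), Finset.sum_const,
    SimpleGraph.card_neighborFinset_eq_degree, hG.degree_eq, nsmul_eq_mul]

lemma bernoulliProb_card_aliveNeighbors_eq (hG : G.IsRegularOfDegree d) (p : ℝ)
    (hg : 2 * r + 2 < G.girth) (v : V) (k : ℕ) :
    bernoulliProb p (edgeFinset' G) (fun s => (aliveNeighbors (openSubgraph G s) r v).card = k)
      = d.choose k * (p * (1 - extinctionProb d p r)) ^ k
        * (1 - p * (1 - extinctionProb d p r)) ^ (d - k) := by
  have hadj : ∀ z ∈ G.neighborFinset v, G.Adj v z := fun z => (G.mem_neighborFinset v z).1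
  have hcard := bernoulliProb_card_filter_eq p (edgeFinset' G) (I := G.neighborFinset v)
    (fun z hz => determinedOn_mem_aliveNeighbors (hadj z hz) (r := r) (by lia))
    ((pairwiseDisjoint_insert_branchEdges hg v).subset hadj)
    (fun z hz => bernoulliProb_mem_aliveNeighbors_eq hG p hg (hadj z hz)) k
  simpa only [filter_mem_aliveNeighbors (openSubgraph_le G _),
    SimpleGraph.card_neighborFinset_eq_degree, hG.degree_eq] using hcard

end BranchProbabilities

/-! ### Locality of the number of surviving branches -/

section Locality

variable {V : Type*} [Fintype V] {G H H' : SimpleGraph V} {A : Finset V} {F : Finset (Sym2 V)}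
  {d i r : ℕ} {u v x y : V}

/-- The vertices at distance at most `i` from the set `A` in `G`. -/
def thickening (G : SimpleGraph V) (A : Finset V) (i : ℕ) : Finset V :=
  Finset.univ.filter fun v => ∃ a ∈ A, ∃ w : G.Walk a v, w.length ≤ i

lemma mem_thickening : v ∈ thickening G A i ↔ ∃ a ∈ A, ∃ w : G.Walk a v, w.length ≤ i := by
  simp only [thickening, Finset.mem_filter, Finset.mem_univ, true_and]

lemma subset_thickening (G : SimpleGraph V) (A : Finset V) (i : ℕ) : A ⊆ thickening G A i :=
  fun a ha => mem_thickening.2 ⟨a, ha, .nil, Nat.zero_le i⟩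

lemma thickening_subset_succ (G : SimpleGraph V) (A : Finset V) (i : ℕ) :
    thickening G A i ⊆ thickening G A (i + 1) := fun _ hv => by
  obtain ⟨a, ha, w, hw⟩ := mem_thickening.1 hv
  exact mem_thickening.2 ⟨a, ha, w, hw.trans (Nat.le_succ i)⟩

lemma mem_thickening_succ_of_adj (hu : u ∈ thickening G A i) (h : G.Adj u v) :
    v ∈ thickening G A (i + 1) := by
  obtain ⟨a, ha, w, hw⟩ := mem_thickening.1 hu
  exact mem_thickening.2 ⟨a, ha, w.concat h, by simpa using hw⟩

lemma card_thickening_le (hG : ∀ v, G.degree v ≤ d) (A : Finset V) (i : ℕ) :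
    (thickening G A i).card ≤ A.card * (d + 1) ^ i := by
  induction i generalizing A with
  | zero =>
    rw [pow_zero, mul_one]
    refine Finset.card_le_card fun v hv => ?_
    obtain ⟨a, ha, w, hw⟩ := mem_thickening.1 hv
    rwa [← w.eq_of_length_eq_zero (Nat.le_zero.1 hw)]
  | succ i ih =>
    have hsub : thickening G A (i + 1)
        ⊆ thickening G (A.biUnion fun a => insert a (G.neighborFinset a)) i := by
      intro v hv
      obtain ⟨a, ha, w, hw⟩ := mem_thickening.1 hv
      cases w with
      | nil => exact subset_thickening G _ i (Finset.mem_biUnion.2 ⟨v, ha, by simp⟩)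
      | cons hz w =>
        exact mem_thickening.2 ⟨_, Finset.mem_biUnion.2 ⟨a, ha, Finset.mem_insert_of_mem
          ((G.mem_neighborFinset _ _).2 hz)⟩, w, by simpa using hw⟩
    have hcard : (A.biUnion fun a => insert a (G.neighborFinset a)).card ≤ A.card * (d + 1) :=
      Finset.card_biUnion_le_card_mul _ _ _ fun a _ => (Finset.card_insert_le _ _).trans <|
        Nat.succ_le_succ (hG a)
    calc (thickening G A (i + 1)).card
        ≤ (A.biUnion fun a => insert a (G.neighborFinset a)).card * (d + 1) ^ i :=
          (Finset.card_le_card hsub).trans (ih _)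
      _ ≤ A.card * (d + 1) * (d + 1) ^ i := Nat.mul_le_mul_right _ hcard
      _ = A.card * (d + 1) ^ (i + 1) := by ring

/-- The vertices at distance at most `r` from an endpoint of an edge in `F`. -/
def affectedVerts (G : SimpleGraph V) (r : ℕ) (F : Finset (Sym2 V)) : Finset V :=
  thickening G (F.biUnion Sym2.toFinset) r

lemma mem_affectedVerts_of_mem {e : Sym2 V} (he : e ∈ F) (hv : v ∈ e) :
    v ∈ affectedVerts G r F :=
  subset_thickening G _ r (Finset.mem_biUnion.2 ⟨e, he, Sym2.mem_toFinset.2 hv⟩)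

lemma card_affectedVerts_le (hG : ∀ v, G.degree v ≤ d) (r : ℕ) (F : Finset (Sym2 V)) :
    (affectedVerts G r F).card ≤ F.card * 2 * (d + 1) ^ r := by
  refine (card_thickening_le hG _ r).trans (Nat.mul_le_mul_right _ ?_)
  refine Finset.card_biUnion_le_card_mul _ _ _ fun e _ => ?_
  rw [Sym2.card_toFinset]
  split_ifs <;> norm_num

lemma mem_affectedVerts_of_not_survives (hHG : H ≤ G)
    (hF : ∀ u v, H.Adj u v → s(u, v) ∉ F → H'.Adj u v) :
    ∀ {r : ℕ} {x y : V}, Survives H r x y → ¬ Survives H' r x y → y ∈ affectedVerts G r F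
  | 0, _, _, _, h => (h trivial).elim
  | r + 1, x, y, ⟨z, hz, hyz, hs⟩, h => by
    by_cases hf : s(y, z) ∈ F
    · exact mem_affectedVerts_of_mem hf (Sym2.mem_mk_left y z)
    · exact mem_thickening_succ_of_adj (mem_affectedVerts_of_not_survives hHG hF hs
        fun h' => h ⟨z, hz, hF _ _ hyz hf, h'⟩) (hHG hyz).symm

lemma aliveNeighbors_subset_of_notMem_affectedVerts (hHG : H ≤ G)
    (hF : ∀ u v, H.Adj u v → s(u, v) ∉ F → H'.Adj u v) (hv : v ∉ affectedVerts G (r + 1) F) :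
    aliveNeighbors H r v ⊆ aliveNeighbors H' r v := by
  intro y hy
  rw [mem_aliveNeighbors] at *
  refine ⟨hF _ _ hy.1 fun hf => hv (mem_affectedVerts_of_mem hf (Sym2.mem_mk_left v y)), ?_⟩
  by_contra hs
  exact hv (mem_thickening_succ_of_adj (mem_affectedVerts_of_not_survives hHG hF hy.2 hs)
    (hHG hy.1).symm)

lemma card_aliveNeighbors_le (hHG : H ≤ G) (hG : ∀ v, G.degree v ≤ d) (r : ℕ) (v : V) :
    (aliveNeighbors H r v).card ≤ d :=
  (Finset.card_le_card (aliveNeighbors_subset_neighborFinset hHG r v)).trans (hG v)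

/-- The sum over all vertices of a function of the number of surviving branches. -/
def aliveSum (G : SimpleGraph V) (r : ℕ) (φ : ℕ → ℝ) (s : Finset (Sym2 V)) : ℝ :=
  ∑ v : V, φ (aliveNeighbors (openSubgraph G s) r v).card

lemma abs_aliveSum_insert_sub_le (hG : ∀ v, G.degree v ≤ d) (r : ℕ) {φ : ℕ → ℝ} {D : ℝ}
    (hφ : ∀ k ≤ d, φ k ∈ Set.Icc 0 D) (e : Sym2 V) (s : Finset (Sym2 V)) :
    |aliveSum G r φ (insert e s) - aliveSum G r φ s| ≤ D * (2 * (d + 1) ^ (r + 1)) := by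
  have hD : 0 ≤ D := (hφ 0 (Nat.zero_le d)).1.trans (hφ 0 (Nat.zero_le d)).2
  have hφs : ∀ s v, φ (aliveNeighbors (openSubgraph G s) r v).card ∈ Set.Icc 0 D := fun s v =>
    hφ _ (card_aliveNeighbors_le (openSubgraph_le G s) hG r v)
  have hlocal : ∀ v ∈ Finset.univ, v ∉ affectedVerts G (r + 1) {e} →
      |φ (aliveNeighbors (openSubgraph G (insert e s)) r v).card
        - φ (aliveNeighbors (openSubgraph G s) r v).card| = 0 := by
    intro v _ hv
    rw [(aliveNeighbors_mono (openSubgraph_mono G (Finset.subset_insert e s)) r v).antisymm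
      (aliveNeighbors_subset_of_notMem_affectedVerts (openSubgraph_le G _) (fun u w h hf => ?_) hv),
      sub_self, abs_zero]
    rw [openSubgraph_adj] at *
    exact ⟨h.1, (Finset.mem_insert.1 h.2).resolve_left fun h => hf (Finset.mem_singleton.2 h)⟩
  have hcard : ((affectedVerts G (r + 1) {e}).card : ℝ) ≤ 2 * (d + 1) ^ (r + 1) := by
    simpa only [Finset.card_singleton, one_mul, Nat.cast_mul, Nat.cast_ofNat, Nat.cast_pow,
      Nat.cast_succ] using Nat.cast_le (α := ℝ).2 (card_affectedVerts_le hG (r + 1) {e})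
  rw [aliveSum, aliveSum, ← Finset.sum_sub_distrib]
  refine (Finset.abs_sum_le_sum_abs _ _).trans ?_
  rw [← Finset.sum_subset (Finset.subset_univ _) hlocal]
  refine (Finset.sum_le_card_nsmul _ _ D fun v _ => ?_).trans ?_
  · simpa only [sub_zero] using abs_sub_le_of_le_of_le (hφs _ v).1 (hφs _ v).2 (hφs s v).1
      (hφs s v).2
  · rw [nsmul_eq_mul, mul_comm]
    exact mul_le_mul_of_nonneg_left hcard hD

end Locality

section Concentration

lemma card_edgeFinset'_le {V : Type} [Fintype V] {G : SimpleGraph V} {d : ℕ}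
    (hG : ∀ v, G.degree v ≤ d) : (edgeFinset' G).card ≤ d * Fintype.card V := by
  have hsub : edgeFinset' G
      ⊆ Finset.univ.biUnion fun v => (G.neighborFinset v).image fun y => s(v, y) := by
    intro e he
    induction e with
    | _ a b => exact Finset.mem_biUnion.2 ⟨a, Finset.mem_univ a, Finset.mem_image.2
        ⟨b, (G.mem_neighborFinset a b).2 (mem_edgeFinset'.1 he), rfl⟩⟩
  refine (Finset.card_le_card hsub).trans ((Finset.card_biUnion_le_card_mul _ _ d
    fun v _ => Finset.card_image_le.trans (hG v)).trans_eq ?_)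
  rw [Finset.card_univ, mul_comm]

lemma exists_aliveSum_concentration (d r : ℕ) {p D η : ℝ} (h0 : 0 ≤ p) (h1 : p ≤ 1) (hD : 0 ≤ D)
    (hη : 0 < η) :
    ∃ c > 0, ∀ (V : Type) [Fintype V] (G : SimpleGraph V), (∀ v, G.degree v ≤ d) →
      ∀ φ : ℕ → ℝ, (∀ k ≤ d, φ k ∈ Set.Icc 0 D) →
        bernoulliProb p (edgeFinset' G) (fun s => η * Fintype.card V
            ≤ |aliveSum G r φ s - bernoulliMean p (edgeFinset' G) (aliveSum G r φ)|)
          ≤ 2 * Real.exp (-c * Fintype.card V) := by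
  set c₀ : ℝ := D * (2 * (d + 1) ^ (r + 1))
  have hc₀ : 0 ≤ c₀ := by positivity
  set l : ℝ := min (1 / (c₀ + 1)) (η / (2 * (c₀ ^ 2 * d + 1)))
  have hl : 0 < l := lt_min (by positivity) (by positivity)
  have hlc : l * c₀ ≤ 1 := by
    have hle : l * (c₀ + 1) ≤ 1 :=
      (le_div_iff₀ (add_pos_of_nonneg_of_pos hc₀ one_pos)).1 (min_le_left _ _)
    nlinarith
  have hlη : l * (c₀ ^ 2 * d) ≤ η / 2 := by
    have hle : l * (2 * (c₀ ^ 2 * d + 1)) ≤ η :=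
      (le_div_iff₀ (by positivity)).1 (min_le_right _ _)
    nlinarith
  refine ⟨l * η / 2, by positivity, fun V _ G hG φ hφ => ?_⟩
  have hE : ((edgeFinset' G).card : ℝ) ≤ d * Fintype.card V := mod_cast card_edgeFinset'_le hG
  refine (bernoulliProb_le_abs_sub_mean_le h0 h1 hl.le hlc fun e _ s _ =>
    abs_aliveSum_insert_sub_le hG r hφ e s).trans ?_
  refine mul_le_mul_of_nonneg_left (Real.exp_le_exp.2 ?_) zero_le_two
  calc (l * c₀) ^ 2 * ((edgeFinset' G).card : ℝ) - l * (η * Fintype.card V)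
      ≤ (l * c₀) ^ 2 * (d * Fintype.card V) - l * (η * Fintype.card V) := by gcongr
    _ = l * Fintype.card V * (l * (c₀ ^ 2 * d)) - l * (η * Fintype.card V) := by ring
    _ ≤ l * Fintype.card V * (η / 2) - l * (η * Fintype.card V) := by gcongr
    _ = -(l * η / 2) * Fintype.card V := by ring

end Concentration

/-! ### Sprinkling -/

section Sprinkling

variable {V : Type} [Fintype V] {G : SimpleGraph V} {A B : Finset V} {D : Finset (Sym2 V)}
  {b δ : ℝ} {d i : ℕ}

lemma ncard_neighborSet (G : SimpleGraph V) (v : V) : (G.neighborSet v).ncard = G.degree v := by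
  rw [Set.ncard_eq_toFinset_card', ← SimpleGraph.card_neighborFinset_eq_degree,
    SimpleGraph.neighborFinset]

lemma IsExpander.degree_le (hG : IsExpander G b d) (v : V) : G.degree v ≤ d :=
  ncard_neighborSet G v ▸ hG.1 v

lemma cutCard_thickening_add_le (hG : ∀ v, G.degree v ≤ d) (D : Finset (Sym2 V)) (A : Finset V)
    (i : ℕ) :
    cutCard G (thickening (G.deleteEdges ↑D) A i) + (thickening (G.deleteEdges ↑D) A i).card * d
      ≤ D.card + (thickening (G.deleteEdges ↑D) A (i + 1)).card * d := by
  set G' := G.deleteEdges (D : Set (Sym2 V))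
  set S := thickening G' A i
  have hsub : (edgeFinset' G).filter (fun e => ∃ x ∈ S, ∃ y, y ∉ S ∧ e = s(x, y))
      ⊆ D ∪ (thickening G' A (i + 1) \ S).biUnion
        fun y => (G.neighborFinset y).image fun x => s(x, y) := by
    intro e he
    obtain ⟨heE, x, hx, y, hy, rfl⟩ := Finset.mem_filter.1 he
    have hxy := mem_edgeFinset'.1 heE
    refine Finset.mem_union.2 (or_iff_not_imp_left.2 fun hD => Finset.mem_biUnion.2 ⟨y, ?_, ?_⟩)
    · exact Finset.mem_sdiff.2
        ⟨mem_thickening_succ_of_adj hx (SimpleGraph.deleteEdges_adj.2 ⟨hxy, hD⟩), hy⟩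
    · exact Finset.mem_image.2 ⟨x, (G.mem_neighborFinset y x).2 hxy.symm, rfl⟩
  have hcut : cutCard G S ≤ D.card + (thickening G' A (i + 1) \ S).card * d :=
    (Finset.card_le_card hsub).trans <| (Finset.card_union_le _ _).trans <|
      Nat.add_le_add_left (Finset.card_biUnion_le_card_mul _ _ _ fun y _ =>
        Finset.card_image_le.trans (hG y)) _
  rw [← Finset.card_sdiff_add_card_eq_card (thickening_subset_succ G' A i), add_mul]
  linarith

lemma half_lt_or_le_card_thickening (hG : IsExpander G b d) (hb : 0 ≤ b)
    (hD : (D.card : ℝ) ≤ b * δ / 2 * Fintype.card V) (hA : δ * Fintype.card V ≤ A.card) (i : ℕ) :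
    (Fintype.card V : ℝ) / 2 < (thickening (G.deleteEdges ↑D) A i).card ∨
      i * (b * δ / 2 * Fintype.card V) ≤ (thickening (G.deleteEdges ↑D) A i).card * d := by
  induction i with
  | zero =>
    right
    rw [Nat.cast_zero, zero_mul]
    positivity
  | succ i ih =>
    set G' := G.deleteEdges (D : Set (Sym2 V))
    have hmono : ((thickening G' A i).card : ℝ) ≤ (thickening G' A (i + 1)).card :=
      mod_cast Finset.card_le_card (thickening_subset_succ G' A i)
    refine or_iff_not_imp_left.2 fun hsmall => ?_
    have hsmall' : ((thickening G' A i).card : ℝ) ≤ (Fintype.card V : ℝ) / 2 :=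
      hmono.trans (not_lt.1 hsmall)
    have hgrow : (i : ℝ) * (b * δ / 2 * Fintype.card V) ≤ (thickening G' A i).card * d :=
      ih.resolve_left hsmall'.not_gt
    have hexpand : b * (thickening G' A i).card ≤ cutCard G (thickening G' A i) := hG.2 _ hsmall'
    have hcut : (cutCard G (thickening G' A i) : ℝ) + (thickening G' A i).card * d
        ≤ D.card + (thickening G' A (i + 1)).card * d :=
      mod_cast cutCard_thickening_add_le hG.degree_le D A i
    have hbA : b * (δ * Fintype.card V) ≤ b * (thickening G' A i).card :=
      mul_le_mul_of_nonneg_left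
        (hA.trans (mod_cast Finset.card_le_card (subset_thickening G' A i))) hb
    push_cast
    linarith

variable [Nonempty V]

lemma half_lt_card_thickening (hG : IsExpander G b d) (hb : 0 ≤ b)
    (hD : (D.card : ℝ) ≤ b * δ / 2 * Fintype.card V) (hA : δ * Fintype.card V ≤ A.card)
    (hi : (d : ℝ) < i * (b * δ)) :
    (Fintype.card V : ℝ) / 2 < (thickening (G.deleteEdges ↑D) A i).card := by
  rcases half_lt_or_le_card_thickening hG hb hD hA i with h | h
  · exact h
  · have hn : (0 : ℝ) < Fintype.card V := mod_cast Fintype.card_pos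
    refine lt_of_mul_lt_mul_right (lt_of_lt_of_le ?_ h) (Nat.cast_nonneg d)
    linarith [mul_lt_mul_of_pos_right hi hn]

lemma exists_short_walk (hG : IsExpander G b d) (hb : 0 ≤ b)
    (hD : (D.card : ℝ) ≤ b * δ / 2 * Fintype.card V) (hA : δ * Fintype.card V ≤ A.card)
    (hB : δ * Fintype.card V ≤ B.card) (hi : (d : ℝ) < i * (b * δ)) :
    ∃ u ∈ A, ∃ v ∈ B, ∃ w : (G.deleteEdges (D : Set (Sym2 V))).Walk u v, w.length ≤ 2 * i := by
  have hA' := half_lt_card_thickening hG hb hD hA hi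
  have hB' := half_lt_card_thickening hG hb hD hB hi
  set G' := G.deleteEdges (D : Set (Sym2 V))
  have hcard : Fintype.card V < (thickening G' A i).card + (thickening G' B i).card := by
    rify
    linarith
  obtain ⟨v, hv⟩ := Finset.inter_nonempty_of_card_lt_card_add_card
    (Finset.subset_univ _) (Finset.subset_univ _) hcard
  obtain ⟨hvA, hvB⟩ := Finset.mem_inter.1 hv
  obtain ⟨a, ha, w, hw⟩ := mem_thickening.1 hvA
  obtain ⟨c, hc, w', hw'⟩ := mem_thickening.1 hvB
  refine ⟨a, ha, c, hc, w.append w'.reverse, ?_⟩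
  rw [SimpleGraph.Walk.length_append, SimpleGraph.Walk.length_reverse]
  lia

end Sprinkling

section Linking

variable {V : Type*} {H H' : SimpleGraph V} {A B Z : Finset V} {u v : V}

/-- Some vertex of `A` is joined to some vertex of `B` in `H`. -/
def Linked (H : SimpleGraph V) (A B : Finset V) : Prop := ∃ a ∈ A, ∃ b ∈ B, H.Reachable a b

lemma Linked.mono (h : H ≤ H') : Linked H A B → Linked H' A B :=
  fun ⟨a, ha, b, hb, hab⟩ => ⟨a, ha, b, hb, hab.mono h⟩

/-- `Z` is a union of vertex sets of connected components of `H`. -/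
def IsUnionOfComps (H : SimpleGraph V) (Z : Finset V) : Prop := ∀ u v, u ∈ Z → H.Adj u v → v ∈ Z

lemma IsUnionOfComps.mem_of_reachable (hZ : IsUnionOfComps H Z) (hu : u ∈ Z)
    (h : H.Reachable u v) : v ∈ Z := by
  obtain ⟨w⟩ := h
  induction w with
  | nil => exact hu
  | cons h _ ih => exact ih (hZ _ _ hu h)

lemma IsUnionOfComps.not_linked (hZ : IsUnionOfComps H Z) (hA : A ⊆ Z) (hB : Disjoint B Z) :
    ¬ Linked H A B := fun ⟨_, ha, _, hb, hab⟩ =>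
  Finset.disjoint_left.1 hB hb (hZ.mem_of_reachable (hA ha) hab)

end Linking

section LinkingProbability

variable {V : Type} [Fintype V] [Nonempty V] {G : SimpleGraph V} {A B : Finset V} {b p δ : ℝ}
  {d i : ℕ}

lemma exists_linking_set (hG : IsExpander G b d) (hb : 0 ≤ b) {D : Finset (Sym2 V)}
    (hD : (D.card : ℝ) ≤ b * δ / 2 * Fintype.card V) (hA : δ * Fintype.card V ≤ A.card)
    (hB : δ * Fintype.card V ≤ B.card) (hi : (d : ℝ) < i * (b * δ)) :
    ∃ Q ⊆ edgeFinset' G, Disjoint Q D ∧ Q.card ≤ 2 * i ∧ Linked (openSubgraph G Q) A B := by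
  obtain ⟨u, hu, v, hv, w, hw⟩ := exists_short_walk hG hb hD hA hB hi
  have hedge : ∀ e ∈ w.edges, e ∈ G.edgeSet ∧ e ∉ D := fun e he => by
    have hmem := w.edges_subset_edgeSet he
    rwa [SimpleGraph.edgeSet_deleteEdges, Set.mem_sdiff, Finset.mem_coe] at hmem
  refine ⟨w.edges.toFinset, fun e he => ?_, Finset.disjoint_left.2 fun e he => ?_, ?_, u, hu, v, hv,
    ⟨w.transfer _ fun e he => ?_⟩⟩
  · exact Finset.mem_filter.2 ⟨Finset.mem_univ e, (hedge e (List.mem_toFinset.1 he)).1⟩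
  · exact (hedge e (List.mem_toFinset.1 he)).2
  · exact (List.toFinset_card_le _).trans (w.length_edges.trans_le hw)
  · have hopen := List.mem_toFinset.2 he
    have hadj := (hedge e he).1
    induction e with
    | _ x y => exact openSubgraph_adj.2 ⟨hadj, hopen⟩

-- Fresh linking sets, disjoint from `D` and from the earlier ones, are found greedily; the events
-- that they are open are independent.
lemma bernoulliProb_not_linked_le (h0 : 0 ≤ p) (h1 : p ≤ 1) (hG : IsExpander G b d) (hb : 0 ≤ b)
    (hA : δ * Fintype.card V ≤ A.card) (hB : δ * Fintype.card V ≤ B.card)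
    (hi : (d : ℝ) < i * (b * δ)) (m : ℕ) (D : Finset (Sym2 V))
    (hD : (D.card : ℝ) + m * (2 * i) ≤ b * δ / 2 * Fintype.card V) :
    bernoulliProb p (edgeFinset' G) (fun t => ¬ Linked (openSubgraph G (t \ D)) A B)
      ≤ (1 - p ^ (2 * i)) ^ m := by
  induction m generalizing D with
  | zero => exact bernoulliProb_le_one h0 h1 _
  | succ m ih =>
    push_cast at hD
    obtain ⟨Q, hQE, hQD, hQcard, hQ⟩ := exists_linking_set hG hb (D := D)
      (by linarith [show (0 : ℝ) ≤ (m + 1) * (2 * i) by positivity]) hA hB hi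
    have hcard : ((D ∪ Q).card : ℝ) ≤ D.card + 2 * i :=
      mod_cast (Finset.card_union_le D Q).trans (Nat.add_le_add_left hQcard _)
    have hclosed : DeterminedOn Q fun t => ¬ Q ⊆ t := fun t => by
      simp only [Finset.subset_inter_iff, subset_rfl, and_true]
    have hunlinked : DeterminedOn (D ∪ Q)ᶜ
        fun t => ¬ Linked (openSubgraph G (t \ (D ∪ Q))) A B := fun t => by
      beta_reduce
      rw [show (t ∩ (D ∪ Q)ᶜ) \ (D ∪ Q) = t \ (D ∪ Q) by
        ext; simp only [Finset.mem_sdiff, Finset.mem_inter, Finset.mem_compl]; tauto]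
    have hdisj : Disjoint Q (D ∪ Q)ᶜ :=
      (disjoint_compl_right (a := D ∪ Q)).mono_left Finset.subset_union_right
    calc bernoulliProb p (edgeFinset' G) (fun t => ¬ Linked (openSubgraph G (t \ D)) A B)
        ≤ bernoulliProb p (edgeFinset' G)
            (fun t => ¬ Q ⊆ t ∧ ¬ Linked (openSubgraph G (t \ (D ∪ Q))) A B) :=
          bernoulliProb_mono h0 h1 fun t _ hl =>
            ⟨fun h => hl (hQ.mono (openSubgraph_mono G (Finset.subset_sdiff.2 ⟨h, hQD⟩))),
              fun h => hl (h.mono (openSubgraph_mono G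
                (Finset.sdiff_subset_sdiff subset_rfl Finset.subset_union_left)))⟩
      _ = (1 - p ^ Q.card) * bernoulliProb p (edgeFinset' G)
            (fun t => ¬ Linked (openSubgraph G (t \ (D ∪ Q))) A B) := by
          rw [bernoulliProb_and_of_disjoint p _ hdisj hclosed hunlinked, bernoulliProb_not,
            bernoulliProb_subset p hQE]
      _ ≤ (1 - p ^ (2 * i)) * (1 - p ^ (2 * i)) ^ m :=
          mul_le_mul (sub_le_sub_left (pow_le_pow_of_le_one h0 h1 hQcard) 1)
            (ih (D ∪ Q) (by linarith)) (bernoulliProb_nonneg h0 h1 _)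
            (sub_nonneg.2 (pow_le_one₀ h0 h1))
      _ = (1 - p ^ (2 * i)) ^ (m + 1) := (pow_succ' _ _).symm

end LinkingProbability

lemma exists_not_linked_bound (d : ℕ) {b δ p : ℝ} (hb : 0 < b) (hδ : 0 < δ) (h0 : 0 < p)
    (h1 : p ≤ 1) :
    ∃ c > 0, ∃ κ > 0, ∀ (V : Type) [Fintype V] [Nonempty V] (G : SimpleGraph V),
      IsExpander G b d → ∀ (D : Finset (Sym2 V)) (A B : Finset V),
        (D.card : ℝ) ≤ κ * Fintype.card V → δ * Fintype.card V ≤ A.card →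
        δ * Fintype.card V ≤ B.card →
          bernoulliProb p (edgeFinset' G) (fun t => ¬ Linked (openSubgraph G (t \ D)) A B)
            ≤ 3 * Real.exp (-c * Fintype.card V) := by
  obtain ⟨i, hi⟩ : ∃ i : ℕ, (d : ℝ) / (b * δ) < i := exists_nat_gt _
  have hi0 : (0 : ℝ) < i := lt_of_le_of_lt (by positivity) hi
  rw [div_lt_iff₀ (by positivity)] at hi
  set q : ℝ := p ^ (2 * i)
  have hq0 : 0 < q := by positivity
  have hq1 : q ≤ 1 := pow_le_one₀ h0.le h1
  set κ : ℝ := b * δ / 4 with hκ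
  have hκ0 : 0 < κ := by positivity
  have hκ2 : b * δ / 2 = κ + κ := by rw [hκ]; ring
  refine ⟨q * (κ / (2 * i)), by positivity, κ, hκ0, fun V _ _ G hG D A B hD hA hB => ?_⟩
  set m : ℕ := ⌊κ * Fintype.card V / (2 * i)⌋₊
  have hm : (m : ℝ) * (2 * i) ≤ κ * Fintype.card V :=
    (le_div_iff₀ (by positivity)).1 (Nat.floor_le (by positivity))
  have hm' : q * (κ * Fintype.card V / (2 * i)) ≤ q * (m + 1) :=
    mul_le_mul_of_nonneg_left (Nat.lt_floor_add_one _).le hq0.le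
  refine (bernoulliProb_not_linked_le h0.le h1 hG hb.le hA hB hi m D
    (by rw [hκ2, add_mul]; exact add_le_add hD hm)).trans ?_
  calc (1 - q) ^ m ≤ Real.exp (-q) ^ m :=
        pow_le_pow_left₀ (sub_nonneg.2 hq1) (Real.one_sub_le_exp_neg q) m
    _ = Real.exp (m * -q) := (Real.exp_nat_mul _ _).symm
    _ ≤ Real.exp (1 + -(q * (κ / (2 * i))) * Fintype.card V) := Real.exp_le_exp.2 <| by
        linarith [show q * (κ * Fintype.card V / (2 * i))
          = q * (κ / (2 * i)) * Fintype.card V by ring]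
    _ = Real.exp 1 * Real.exp (-(q * (κ / (2 * i))) * Fintype.card V) := Real.exp_add _ _
    _ ≤ 3 * Real.exp (-(q * (κ / (2 * i))) * Fintype.card V) :=
        mul_le_mul_of_nonneg_right (Real.exp_one_lt_d9.le.trans (by norm_num)) (Real.exp_pos _).le

section LargeComponents

variable {V : Type} [Fintype V]

/-- The vertices lying in components of `H` with at least `K` vertices. -/
def largeCompVerts (H : SimpleGraph V) (K : ℕ) : Finset V :=
  Finset.univ.filter fun v => K ≤ (compVerts H (H.connectedComponentMk v)).card

/-- The components of `H` with at least `K` vertices. -/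
def largeComps (H : SimpleGraph V) (K : ℕ) : Finset H.ConnectedComponent :=
  Finset.univ.filter fun c => K ≤ (compVerts H c).card

lemma card_largeComps_mul_le (H : SimpleGraph V) (K : ℕ) :
    (largeComps H K).card * K ≤ Fintype.card V :=
  calc (largeComps H K).card * K = ∑ _ ∈ largeComps H K, K := by rw [Finset.sum_const, smul_eq_mul]
    _ ≤ ∑ c ∈ largeComps H K, (compVerts H c).card :=
        Finset.sum_le_sum fun _ h => (Finset.mem_filter.1 h).2
    _ ≤ ∑ c, (compVerts H c).card := Finset.sum_le_sum_of_subset (Finset.subset_univ _)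
    _ = Fintype.card V :=
        (Finset.card_eq_sum_card_fiberwise fun _ _ => Finset.mem_coe.2 (Finset.mem_univ _)).symm

/-- The unions of components of `H` that have at least `K` vertices. -/
def largeCompUnions (H : SimpleGraph V) (K : ℕ) : Finset (Finset V) :=
  (largeCompVerts H K).powerset.filter (IsUnionOfComps H)

lemma card_largeCompUnions_le (H : SimpleGraph V) (K : ℕ) :
    (largeCompUnions H K).card ≤ 2 ^ (largeComps H K).card := by
  rw [← Finset.card_powerset]
  refine Finset.card_le_card_of_injOn (fun A => A.image H.connectedComponentMk) ?_ ?_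
  · intro A hA
    obtain ⟨hA, -⟩ := Finset.mem_filter.1 (Finset.mem_coe.1 hA)
    refine Finset.mem_coe.2 (Finset.mem_powerset.2 fun c hc => ?_)
    obtain ⟨v, hv, rfl⟩ := Finset.mem_image.1 hc
    exact Finset.mem_filter.2 ⟨Finset.mem_univ _,
      (Finset.mem_filter.1 (Finset.mem_powerset.1 hA hv)).2⟩
  · have hle : ∀ A B, B ∈ largeCompUnions H K →
        A.image H.connectedComponentMk = B.image H.connectedComponentMk → A ⊆ B := by
      intro A B hB h v hv
      obtain ⟨u, hu, huv⟩ := Finset.mem_image.1 (h ▸ Finset.mem_image_of_mem _ hv)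
      exact (Finset.mem_filter.1 hB).2.mem_of_reachable hu
        (SimpleGraph.ConnectedComponent.exact huv)
    exact fun A hA B hB h => (hle A B hB h).antisymm (hle B A hA h.symm)

end LargeComponents

lemma exists_card_largeCompUnions_le_exp {c : ℝ} (hc : 0 < c) :
    ∃ K : ℕ, ∀ (V : Type) [Fintype V] (H : SimpleGraph V),
      ((largeCompUnions H K).card : ℝ) ≤ Real.exp (c * Fintype.card V) := by
  obtain ⟨K, hK⟩ : ∃ K : ℕ, 1 / c < K := exists_nat_gt _
  rw [div_lt_iff₀ hc] at hK
  refine ⟨K, fun V _ H => ?_⟩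
  set j := (largeComps H K).card
  have hj : (j : ℝ) ≤ c * Fintype.card V :=
    calc (j : ℝ) ≤ j * (K * c) := le_mul_of_one_le_right (Nat.cast_nonneg j) hK.le
      _ = c * (j * K) := by ring
      _ ≤ c * Fintype.card V :=
          mul_le_mul_of_nonneg_left (mod_cast card_largeComps_mul_le H K) hc.le
  calc ((largeCompUnions H K).card : ℝ) ≤ 2 ^ j := mod_cast card_largeCompUnions_le H K
    _ ≤ Real.exp 1 ^ j :=
        pow_le_pow_left₀ zero_le_two (by linarith [Real.add_one_le_exp (1 : ℝ)]) j
    _ = Real.exp j := Real.exp_one_pow j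
    _ ≤ Real.exp (c * Fintype.card V) := Real.exp_le_exp.2 hj

lemma exists_card_small_edge_sets_le_exp (d : ℕ) {c : ℝ} (hc : 0 < c) :
    ∃ τ > 0, ∀ (V : Type) [Fintype V] (G : SimpleGraph V), (∀ v, G.degree v ≤ d) →
      (((edgeFinset' G).powerset.filter fun F => (F.card : ℝ) ≤ τ * Fintype.card V).card : ℝ)
        ≤ Real.exp (c * Fintype.card V) := by
  set x : ℝ := min 1 (c / (2 * (d + 1)))
  have hx0 : 0 < x := lt_min one_pos (by positivity)
  have hx1 : x ≤ 1 := min_le_left _ _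
  have hlog : Real.log x ≤ 0 := Real.log_nonpos hx0.le hx1
  have hxd : x * (2 * (d + 1)) ≤ c := (le_div_iff₀ (by positivity)).1 (min_le_right _ _)
  have hτ : c / (2 * (1 - Real.log x)) * (2 * (1 - Real.log x)) = c :=
    div_mul_cancel₀ c (by linarith)
  set τ : ℝ := c / (2 * (1 - Real.log x))
  have hτ0 : 0 < τ := div_pos hc (by linarith)
  refine ⟨τ, hτ0, fun V _ G hG => ?_⟩
  refine (card_filter_card_le_le_exp (edgeFinset' G) (τ * Fintype.card V) hx0 hx1).trans
    (Real.exp_le_exp.2 ?_)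
  have hE : ((edgeFinset' G).card : ℝ) ≤ d * Fintype.card V := mod_cast card_edgeFinset'_le hG
  calc x * (edgeFinset' G).card - τ * Fintype.card V * Real.log x
      ≤ x * (d * Fintype.card V) - τ * Fintype.card V * Real.log x :=
        sub_le_sub_right (mul_le_mul_of_nonneg_left hE hx0.le) _
    _ = (x * d - τ * Real.log x) * Fintype.card V := by ring
    _ ≤ c * Fintype.card V := mul_le_mul_of_nonneg_right (by linarith) (Nat.cast_nonneg _)

/-- After deleting few edges, some two unions of large components of the first percolation are
not linked by the second percolation. -/
def BadSplit {V : Type} [Fintype V] (G : SimpleGraph V) (K : ℕ) (τ δ : ℝ)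
    (s t : Finset (Sym2 V)) : Prop :=
  ∃ F ∈ (edgeFinset' G).powerset.filter fun F => (F.card : ℝ) ≤ τ * Fintype.card V,
    ∃ A ∈ largeCompUnions (openSubgraph G (s \ F)) K, δ * Fintype.card V ≤ A.card ∧
      δ * Fintype.card V ≤ (largeCompVerts (openSubgraph G (s \ F)) K \ A).card ∧
      ¬ Linked (openSubgraph G (t \ F)) A (largeCompVerts (openSubgraph G (s \ F)) K \ A)

lemma exists_badSplit_bound (d : ℕ) {b δ p : ℝ} (hb : 0 < b) (hδ : 0 < δ) (h0 : 0 < p)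
    (h1 : p ≤ 1) :
    ∃ c > 0, ∃ τ > 0, ∃ K : ℕ, ∀ (V : Type) [Fintype V] [Nonempty V] (G : SimpleGraph V),
      IsExpander G b d → ∀ s, bernoulliProb p (edgeFinset' G) (BadSplit G K τ δ s)
        ≤ 3 * Real.exp (-c * Fintype.card V) := by
  obtain ⟨c, hc, κ, hκ, hlink⟩ := exists_not_linked_bound d hb hδ h0 h1
  obtain ⟨K, hK⟩ := exists_card_largeCompUnions_le_exp (c := c / 4) (by positivity)
  obtain ⟨τ, hτ, hsmall⟩ := exists_card_small_edge_sets_le_exp d (c := c / 4) (by positivity)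
  refine ⟨c / 2, by positivity, min κ τ, lt_min hκ hτ, K, fun V _ _ G hG s => ?_⟩
  set n : ℝ := (Fintype.card V : ℝ)
  have hedges : (((edgeFinset' G).powerset.filter fun F => (F.card : ℝ) ≤ min κ τ * n).card : ℝ)
      ≤ Real.exp (c / 4 * n) := by
    refine le_trans (mod_cast Finset.card_le_card (Finset.monotone_filter_right _ fun F _ hF =>
      hF.trans ?_)) (hsmall V G hG.degree_le)
    exact mul_le_mul_of_nonneg_right (min_le_right _ _) (Nat.cast_nonneg _)
  calc bernoulliProb p (edgeFinset' G) (BadSplit G K (min κ τ) δ s)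
      ≤ _ * (Real.exp (c / 4 * n) * (3 * Real.exp (-c * n))) := by
        refine bernoulliProb_exists_le_card_mul h0.le h1 fun F hF => ?_
        refine (bernoulliProb_exists_le_card_mul h0.le h1 fun A _ => ?_).trans
          (mul_le_mul_of_nonneg_right (hK V (openSubgraph G (s \ F))) (by positivity))
        have hFκ : (F.card : ℝ) ≤ κ * n := (Finset.mem_filter.1 hF).2.trans
          (mul_le_mul_of_nonneg_right (min_le_left _ _) (Nat.cast_nonneg _))
        by_cases hA : δ * n ≤ A.card ∧
            δ * n ≤ (largeCompVerts (openSubgraph G (s \ F)) K \ A).card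
        · exact (bernoulliProb_mono h0.le h1 fun _ _ h => h.2.2).trans
            (hlink V G hG F A _ hFκ hA.1 hA.2)
        · refine (bernoulliProb_mono h0.le h1 fun _ _ h => hA ⟨h.1, h.2.1⟩).trans ?_
          rw [bernoulliProb_false]
          positivity
    _ ≤ Real.exp (c / 4 * n) * (Real.exp (c / 4 * n) * (3 * Real.exp (-c * n))) :=
        mul_le_mul_of_nonneg_right hedges (by positivity)
    _ = 3 * (Real.exp (c / 4 * n) * Real.exp (c / 4 * n) * Real.exp (-c * n)) := by ring
    _ = 3 * Real.exp (-(c / 2) * n) := by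
        rw [← Real.exp_add, ← Real.exp_add]
        ring_nf

/-! ### Graphs that do not split a set of vertices -/

section Components

variable {V : Type} {H : SimpleGraph V} {c : H.ConnectedComponent} {K : ℕ} {u v : V} {Z : Finset V}

lemma IsUnionOfComps.biUnion {ι : Type*} {I : Finset ι} {f : ι → Finset V}
    (h : ∀ i ∈ I, IsUnionOfComps H (f i)) : IsUnionOfComps H (I.biUnion f) := fun u v hu huv => by
  obtain ⟨i, hi, hu⟩ := Finset.mem_biUnion.1 hu
  exact Finset.mem_biUnion.2 ⟨i, hi, h i hi u v hu huv⟩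

variable [Fintype V]

lemma mem_compVerts : v ∈ compVerts H c ↔ H.connectedComponentMk v = c := by
  simp only [compVerts, Finset.mem_filter, Finset.mem_univ, true_and]

lemma mem_compVerts_mk : v ∈ compVerts H (H.connectedComponentMk u) ↔ H.Reachable u v := by
  rw [mem_compVerts, SimpleGraph.ConnectedComponent.eq, SimpleGraph.reachable_comm]

lemma isUnionOfComps_compVerts (H : SimpleGraph V) (c : H.ConnectedComponent) :
    IsUnionOfComps H (compVerts H c) := fun u v hu h => by
  rw [mem_compVerts] at *
  rw [← hu, SimpleGraph.ConnectedComponent.eq]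
  exact h.symm.reachable

lemma compVerts_subset (hZ : IsUnionOfComps H Z) (hv : v ∈ Z) :
    compVerts H (H.connectedComponentMk v) ⊆ Z := fun _ hu =>
  hZ.mem_of_reachable hv (mem_compVerts_mk.1 hu)

lemma mem_largeCompVerts :
    v ∈ largeCompVerts H K ↔ K ≤ (compVerts H (H.connectedComponentMk v)).card := by
  simp only [largeCompVerts, Finset.mem_filter, Finset.mem_univ, true_and]

lemma isUnionOfComps_largeCompVerts (H : SimpleGraph V) (K : ℕ) :
    IsUnionOfComps H (largeCompVerts H K) := fun u v hu h => by
  rw [mem_largeCompVerts] at *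
  rwa [← SimpleGraph.ConnectedComponent.sound h.reachable]

end Components

section SurvivingVertices

variable {V : Type} {G H : SimpleGraph V} {K r j : ℕ} {v x y : V}

lemma Survives.exists_isPath (hHG : H ≤ G) : ∀ {r : ℕ} {x y : V}, Survives H r x y → G.Adj x y →
    r + 2 < G.girth → ∃ (u : V) (w : H.Walk y u), w.IsPath ∧ w.length = r ∧ x ∉ w.support
  | 0, _, y, _, hxy, _ => ⟨y, .nil, .nil, rfl, by simpa using hxy.ne⟩
  | r + 1, x, y, ⟨z, hz, hyz, hs⟩, hxy, hg => by
    obtain ⟨u, w, hw, hl, hy⟩ := hs.exists_isPath hHG (hHG hyz) (by lia)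
    have hx : x ∉ (w.mapLe hHG).support := notMem_support_of_lt_girth hxy hz (hHG hyz)
      ((SimpleGraph.Walk.isPath_mapLe hHG).2 hw) (by simpa using hy) (by simp; lia)
    exact ⟨u, .cons hyz w, hw.cons hy, by simp [hl], by simpa [hxy.ne] using hx⟩

variable [Fintype V]

lemma Survives.mem_largeCompVerts (hHG : H ≤ G) (hs : Survives H r x y) (hxy : G.Adj x y)
    (hg : r + 2 < G.girth) : y ∈ largeCompVerts H (r + 1) := by
  obtain ⟨u, w, hw, hl, -⟩ := hs.exists_isPath hHG hxy hg
  rw [Percolation.mem_largeCompVerts, ← hl, ← SimpleGraph.Walk.length_support,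
    ← List.toFinset_card_of_nodup hw.support_nodup]
  exact Finset.card_le_card fun a ha =>
    mem_compVerts_mk.2 ⟨w.takeUntil a (List.mem_toFinset.1 ha)⟩

/-- The vertices with at least one branch of depth `j` in `H`. -/
def survivingVerts (H : SimpleGraph V) (j : ℕ) : Finset V :=
  Finset.univ.filter fun v => (aliveNeighbors H j v).Nonempty

lemma mem_survivingVerts : v ∈ survivingVerts H j ↔ ∃ y, H.Adj v y ∧ Survives H j v y := by
  simp only [survivingVerts, Finset.Nonempty, mem_aliveNeighbors, Finset.mem_filter,
    Finset.mem_univ, true_and]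

lemma survivingVerts_subset_largeCompVerts (hHG : H ≤ G) (hg : j + 2 < G.girth) :
    survivingVerts H j ⊆ largeCompVerts H (j + 1) := fun v hv => by
  obtain ⟨y, hvy, hs⟩ := mem_survivingVerts.1 hv
  exact isUnionOfComps_largeCompVerts H _ _ _ (hs.mem_largeCompVerts hHG (hHG hvy) hg) hvy.symm

lemma survivingVerts_sdiff_affectedVerts_subset (s F : Finset (Sym2 V)) (hK : K ≤ j + 1)
    (hg : j + 2 < G.girth) :
    survivingVerts (openSubgraph G s) j \ affectedVerts G (j + 1) F
      ⊆ largeCompVerts (openSubgraph G (s \ F)) K := fun v hv => by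
  obtain ⟨hv, hva⟩ := Finset.mem_sdiff.1 hv
  have hsub : aliveNeighbors (openSubgraph G s) j v
      ⊆ aliveNeighbors (openSubgraph G (s \ F)) j v :=
    aliveNeighbors_subset_of_notMem_affectedVerts (openSubgraph_le G s) (fun a b hab hf => by
      rw [openSubgraph_adj] at *
      exact ⟨hab.1, Finset.mem_sdiff.2 ⟨hab.2, hf⟩⟩) hva
  have hv' : v ∈ survivingVerts (openSubgraph G (s \ F)) j :=
    Finset.mem_filter.2 ⟨Finset.mem_univ v, (Finset.mem_filter.1 hv).2.mono hsub⟩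
  exact mem_largeCompVerts.2 (hK.trans (mem_largeCompVerts.1
    (survivingVerts_subset_largeCompVerts (openSubgraph_le G _) hg hv')))

end SurvivingVertices

section Unsplit

variable {V : Type} [Fintype V] {G H : SimpleGraph V} {Y : Finset V} {m : ℝ}

/-- Every union of components of `H` contains fewer than `m` vertices of `Y`, or all but
fewer than `m`. -/
def Unsplit (H : SimpleGraph V) (Y : Finset V) (m : ℝ) : Prop :=
  ∀ Z, IsUnionOfComps H Z → ((Y ∩ Z).card : ℝ) < m ∨ ((Y \ Z).card : ℝ) < m

lemma unsplit_of_not_badSplit {K j : ℕ} {τ δ : ℝ} {s t F : Finset (Sym2 V)}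
    (hbad : ¬ BadSplit G K τ δ s t) (hK : K ≤ j + 1) (hg : j + 2 < G.girth)
    (hFE : F ⊆ edgeFinset' G) (hF : (F.card : ℝ) ≤ τ * Fintype.card V)
    (haff : ((affectedVerts G (j + 1) F).card : ℝ) ≤ δ * Fintype.card V) :
    Unsplit (openSubgraph G ((s ∪ t) \ F)) (survivingVerts (openSubgraph G s) j)
      (2 * (δ * Fintype.card V)) := by
  intro Z hZ
  set Y := survivingVerts (openSubgraph G s) j
  set L := largeCompVerts (openSubgraph G (s \ F)) K
  have hclosed : ∀ {a}, a ⊆ s ∪ t → IsUnionOfComps (openSubgraph G (a \ F)) Z := fun ha u v hu h =>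
    hZ u v hu (openSubgraph_mono G (Finset.sdiff_subset_sdiff ha subset_rfl) h)
  have hA : L ∩ Z ∈ largeCompUnions (openSubgraph G (s \ F)) K :=
    Finset.mem_filter.2 ⟨Finset.mem_powerset.2 Finset.inter_subset_left, fun u v hu h => by
      rw [Finset.mem_inter] at *
      exact ⟨isUnionOfComps_largeCompVerts _ K u v hu.1 h,
        hclosed Finset.subset_union_left u v hu.2 h⟩⟩
  have hunlinked : ¬ Linked (openSubgraph G (t \ F)) (L ∩ Z) (L \ (L ∩ Z)) :=
    (hclosed Finset.subset_union_right).not_linked Finset.inter_subset_right <| by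
      rw [Finset.sdiff_inter_self_left]
      exact Finset.sdiff_disjoint
  have hY : Y \ affectedVerts G (j + 1) F ⊆ L :=
    survivingVerts_sdiff_affectedVerts_subset s F hK hg
  have hlower : ∀ W U : Finset V, W \ affectedVerts G (j + 1) F ⊆ U →
      2 * (δ * Fintype.card V) ≤ W.card → δ * Fintype.card V ≤ U.card := fun W U hWU hW => by
    have hcard : (W.card : ℝ) ≤ U.card + (affectedVerts G (j + 1) F).card := mod_cast
      Finset.card_le_card_sdiff_add_card.trans
        (Nat.add_le_add_right (Finset.card_le_card hWU) _)
    linarith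
  by_contra! hcon
  refine hbad ⟨F, Finset.mem_filter.2 ⟨Finset.mem_powerset.2 hFE, hF⟩, _, hA,
    hlower _ _ (fun v hv => ?_) hcon.1, hlower _ _ (fun v hv => ?_) hcon.2, hunlinked⟩ <;>
  · have := @hY v
    simp only [Finset.mem_sdiff, Finset.mem_inter] at *
    tauto

lemma Unsplit.exists_comp (hU : Unsplit H Y m) (hm : 0 < m) (hY : 3 * m ≤ Y.card) :
    ∃ c : H.ConnectedComponent, ((Y \ compVerts H c).card : ℝ) < m := by
  by_contra! hcon
  have hlight : ∀ I : Finset H.ConnectedComponent,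
      ((Y ∩ I.biUnion (compVerts H)).card : ℝ) < m := fun I => by
    induction I using Finset.induction_on with
    | empty => simpa using hm
    | insert c I _ ih =>
      set Z := (insert c I).biUnion (compVerts H) with hZ
      refine (hU Z (.biUnion fun c _ => isUnionOfComps_compVerts H c)).resolve_right fun h => ?_
      have hc := (hU _ (isUnionOfComps_compVerts H c)).resolve_right (hcon c).not_gt
      have hinsert : ((Y ∩ Z).card : ℝ)
          ≤ (Y ∩ compVerts H c).card + (Y ∩ I.biUnion (compVerts H)).card := by
        rw [hZ, Finset.biUnion_insert, Finset.inter_union_distrib_left]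
        exact mod_cast Finset.card_union_le _ _
      have htotal : ((Y ∩ Z).card : ℝ) + (Y \ Z).card = Y.card :=
        mod_cast Finset.card_inter_add_card_sdiff Y Z
      linarith
  have hall : Y ∩ Finset.univ.biUnion (compVerts H) = Y :=
    Finset.inter_eq_left.2 fun v _ =>
      Finset.mem_biUnion.2 ⟨_, Finset.mem_univ _, mem_compVerts.2 rfl⟩
  linarith [hall ▸ hlight Finset.univ]

end Unsplit

section Sides

variable {V : Type} [Fintype V] {H : SimpleGraph V} {Y : Finset V} {m : ℝ} {d : ℕ}
  {u u' v w z : V} {c : H.ConnectedComponent}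

/-- The component of `w` after removing the edge `vw` from `H`. -/
def side (H : SimpleGraph V) (v w : V) : Finset V :=
  Finset.univ.filter fun u => (H.deleteEdges {s(v, w)}).Reachable w u

lemma mem_side : u ∈ side H v w ↔ (H.deleteEdges {s(v, w)}).Reachable w u := by
  simp only [side, Finset.mem_filter, Finset.mem_univ, true_and]

lemma self_mem_side (H : SimpleGraph V) (v w : V) : w ∈ side H v w := mem_side.2 .rfl

lemma isUnionOfComps_side (H : SimpleGraph V) (v w : V) :
    IsUnionOfComps (H.deleteEdges {s(v, w)}) (side H v w) := fun u u' hu h => by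
  rw [mem_side] at *
  exact hu.trans h.reachable

lemma mem_side_of_adj (hu : u ∈ side H v w) (h : H.Adj u u') (hne : s(u, u') ≠ s(v, w)) :
    u' ∈ side H v w :=
  isUnionOfComps_side H v w u u' hu (SimpleGraph.deleteEdges_adj.2 ⟨h, hne⟩)

lemma side_subset_side (hzv : z ≠ v) (hwz : H.Adj w z) (hw : w ∉ side H w z) :
    side H w z ⊆ side H v w := by
  have hz : z ∈ side H v w := by
    refine mem_side_of_adj (self_mem_side H v w) hwz fun h => ?_
    rcases Sym2.eq_iff.1 h with h | h
    · exact hwz.ne h.2.symm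
    · exact hzv h.2
  have hclosed : IsUnionOfComps (H.deleteEdges {s(w, z)}) (side H w z ∩ side H v w) := by
    intro u u' hu h
    rw [Finset.mem_inter] at *
    have hu' := isUnionOfComps_side H w z u u' hu.1 h
    refine ⟨hu', mem_side_of_adj hu.2 (SimpleGraph.deleteEdges_le _ h) fun he => ?_⟩
    rcases Sym2.eq_iff.1 he with he | he
    · exact hw (he.2 ▸ hu')
    · exact hw (he.1 ▸ hu.1)
  exact fun u hu => (Finset.mem_inter.1 (hclosed.mem_of_reachable
    (Finset.mem_inter.2 ⟨self_mem_side H w z, hz⟩) (mem_side.1 hu))).2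

lemma side_subset_insert_biUnion (H : SimpleGraph V) (v w : V) :
    side H v w ⊆ insert w (((H.neighborFinset w).erase v).biUnion (side H w)) := by
  have hclosed : IsUnionOfComps (H.deleteEdges {s(v, w)})
      (insert w (((H.neighborFinset w).erase v).biUnion (side H w))) := fun u u' hu h => by
    rw [SimpleGraph.deleteEdges_adj] at h
    rw [Finset.mem_insert, Finset.mem_biUnion] at *
    rcases hu with rfl | ⟨z, hz, hu⟩
    · refine Or.inr ⟨u', Finset.mem_erase.2 ⟨?_, (H.mem_neighborFinset _ _).2 h.1⟩,
        self_mem_side H u u'⟩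
      rintro rfl
      exact h.2 Sym2.eq_swap
    · by_cases he : s(u, u') = s(w, z)
      · rcases Sym2.eq_iff.1 he with he | he
        · exact Or.inr ⟨z, hz, he.2 ▸ self_mem_side H w z⟩
        · exact Or.inl he.2
      · exact Or.inr ⟨z, hz, mem_side_of_adj hu h.1 he⟩
  exact fun u hu => hclosed.mem_of_reachable (Finset.mem_insert_self _ _) (mem_side.1 hu)

lemma isUnionOfComps_side_union_side (H : SimpleGraph V) (v w : V) :
    IsUnionOfComps H (side H v w ∪ side H w v) := fun u u' hu h => by
  rw [Finset.mem_union] at *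
  by_cases he : s(u, u') = s(v, w)
  · rcases Sym2.eq_iff.1 he with he | he
    · exact Or.inl (he.2 ▸ self_mem_side H v w)
    · exact Or.inr (he.2 ▸ self_mem_side H w v)
  · rcases hu with hu | hu
    · exact Or.inl (mem_side_of_adj hu h he)
    · exact Or.inr (mem_side_of_adj hu h (by rwa [Sym2.eq_swap (a := w)]))

lemma card_inter_side_le (hdeg : H.degree w ≤ d) (hm : 0 ≤ m)
    (hlight : ∀ z ∈ (H.neighborFinset w).erase v, ((Y ∩ side H w z).card : ℝ) ≤ m) :
    ((Y ∩ side H v w).card : ℝ) ≤ 1 + d * m := by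
  have hsub : Y ∩ side H v w
      ⊆ insert w (((H.neighborFinset w).erase v).biUnion fun z => Y ∩ side H w z) := fun u hu => by
    obtain ⟨huY, hu⟩ := Finset.mem_inter.1 hu
    have hu := side_subset_insert_biUnion H v w hu
    rw [Finset.mem_insert, Finset.mem_biUnion] at *
    exact hu.imp_right fun ⟨z, hz, h⟩ => ⟨z, hz, Finset.mem_inter.2 ⟨huY, h⟩⟩
  have herase : (((H.neighborFinset w).erase v).card : ℝ) ≤ d :=
    mod_cast (Finset.card_le_card (Finset.erase_subset _ _)).trans hdeg
  calc ((Y ∩ side H v w).card : ℝ)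
      ≤ ∑ z ∈ (H.neighborFinset w).erase v, ((Y ∩ side H w z).card : ℝ) + 1 :=
        mod_cast (Finset.card_le_card hsub).trans ((Finset.card_insert_le _ _).trans
          (Nat.add_le_add_right Finset.card_biUnion_le 1))
    _ ≤ ((H.neighborFinset w).erase v).card * m + 1 :=
        add_le_add_left ((Finset.sum_le_card_nsmul _ _ _ hlight).trans_eq (nsmul_eq_mul _ _)) 1
    _ ≤ d * m + 1 := by gcongr
    _ = 1 + d * m := add_comm _ _

lemma exists_adj_of_one_lt_card_compVerts (hc : 1 < (compVerts H c).card) :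
    ∃ v w, H.Adj v w ∧ v ∈ compVerts H c := by
  obtain ⟨v, hv⟩ := Finset.card_pos.1 (zero_lt_one.trans hc)
  by_contra! hcon
  have hclosed : IsUnionOfComps H {v} := fun u w hu huw =>
    (hcon u w huw (Finset.mem_singleton.1 hu ▸ hv)).elim
  have hsub := Finset.card_le_card (compVerts_subset hclosed (Finset.mem_singleton_self v))
  rw [mem_compVerts.1 hv, Finset.card_singleton] at hsub
  exact hc.not_ge hsub

lemma exists_adj_le_card_inter_side (hm : 1 ≤ m)
    (hc : 2 * m ≤ ((Y ∩ compVerts H c).card : ℝ)) :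
    ∃ v w, H.Adj v w ∧ v ∈ compVerts H c ∧ m ≤ ((Y ∩ side H v w).card : ℝ) := by
  have hlarge : 1 < (compVerts H c).card := by
    have : ((Y ∩ compVerts H c).card : ℝ) ≤ (compVerts H c).card :=
      mod_cast Finset.card_le_card Finset.inter_subset_right
    exact_mod_cast (by linarith : (1 : ℝ) < (compVerts H c).card)
  obtain ⟨v, w, hvw, hv⟩ := exists_adj_of_one_lt_card_compVerts hlarge
  have hcover : Y ∩ compVerts H c ⊆ (Y ∩ side H v w) ∪ (Y ∩ side H w v) := by
    rw [← Finset.inter_union_distrib_left, ← mem_compVerts.1 hv]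
    exact Finset.inter_subset_inter_left (compVerts_subset (isUnionOfComps_side_union_side H v w)
      (Finset.mem_union_right _ (self_mem_side H w v)))
  have hsum : ((Y ∩ compVerts H c).card : ℝ)
      ≤ (Y ∩ side H v w).card + (Y ∩ side H w v).card :=
    mod_cast (Finset.card_le_card hcover).trans (Finset.card_union_le _ _)
  by_cases h : m ≤ ((Y ∩ side H v w).card : ℝ)
  · exact ⟨v, w, hvw, hv, h⟩
  · exact ⟨w, v, hvw.symm, isUnionOfComps_compVerts H c _ _ hv hvw, by linarith⟩

-- If all edges of `c` were bridges, each would have exactly one heavy side, and a heavy side of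
-- minimal size would be covered by its root and at most `d` light sides.
lemma exists_adj_not_bridge (hdeg : ∀ v, H.degree v ≤ d)
    (hc : ((Y \ compVerts H c).card : ℝ) < m) (hm : 1 ≤ m) (hY : 1 + (d + 3) * m ≤ Y.card)
    (hU : ∀ v w, H.Adj v w → Unsplit (H.deleteEdges {s(v, w)}) Y m) :
    ∃ v w, H.Adj v w ∧ v ∈ compVerts H c ∧ (H.deleteEdges {s(v, w)}).Reachable v w := by
  by_contra! hbridge
  have hdm : 0 ≤ (d : ℝ) * m := by positivity
  have htotal : ∀ Z : Finset V, ((Y ∩ Z).card : ℝ) + (Y \ Z).card = Y.card := fun Z =>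
    mod_cast Finset.card_inter_add_card_sdiff Y Z
  let heavy : Finset (V × V) := Finset.univ.filter fun e =>
    H.Adj e.1 e.2 ∧ e.1 ∈ compVerts H c ∧ m ≤ ((Y ∩ side H e.1 e.2).card : ℝ)
  have hne : heavy.Nonempty := by
    obtain ⟨v, w, h⟩ := exists_adj_le_card_inter_side (c := c) hm
      (by linarith [htotal (compVerts H c)])
    exact ⟨(v, w), Finset.mem_filter.2 ⟨Finset.mem_univ _, h⟩⟩
  obtain ⟨⟨v, w⟩, hvw, hmin⟩ := heavy.exists_min_image (fun e => (side H e.1 e.2).card) hne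
  obtain ⟨-, hadj, hv, hheavy⟩ := Finset.mem_filter.1 hvw
  have hw := isUnionOfComps_compVerts H c _ _ hv hadj
  have hrest := (hU v w hadj _ (isUnionOfComps_side H v w)).resolve_left hheavy.not_gt
  have hlight : ∀ z ∈ (H.neighborFinset w).erase v, ((Y ∩ side H w z).card : ℝ) ≤ m := by
    intro z hz
    obtain ⟨hzv, hz⟩ := Finset.mem_erase.1 hz
    have hwz := (H.mem_neighborFinset _ _).1 hz
    have hw' : w ∉ side H w z := fun h => hbridge w z hwz hw (mem_side.1 h).symm
    by_contra! hlt
    refine (hmin (w, z) (Finset.mem_filter.2 ⟨Finset.mem_univ _, hwz, hw, hlt.le⟩)).not_gt ?_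
    exact Finset.card_lt_card ((Finset.ssubset_iff_of_subset (side_subset_side hzv hwz hw')).2
      ⟨w, self_mem_side H v w, hw'⟩)
  linarith [card_inter_side_le (hdeg w) (by linarith) hlight, htotal (side H v w)]

end Sides

/-! ### The 2-core of a component -/

section TwoCore

variable {V : Type} {C H : SimpleGraph V} {c : H.ConnectedComponent} {u v x y : V}

lemma twoCoreComp_le (H : SimpleGraph V) (c : H.ConnectedComponent) : twoCoreComp H c ≤ H :=
  sSup_le fun _ h => h.1

lemma le_twoCoreComp (hC : C ≤ H) (hc : ∀ v ∈ C.support, H.connectedComponentMk v = c)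
    (hdeg : ∀ v ∈ C.support, 2 ≤ (C.neighborSet v).ncard) : C ≤ twoCoreComp H c :=
  le_sSup ⟨hC, hc, hdeg⟩

lemma connectedComponentMk_eq_of_mem_support (hv : v ∈ (twoCoreComp H c).support) :
    H.connectedComponentMk v = c := by
  obtain ⟨u, hu⟩ := hv
  obtain ⟨C, hC, hvu⟩ := SimpleGraph.sSup_adj.1 hu
  exact hC.2.1 v ⟨u, hvu⟩

lemma twoCoreComp_adj_of_mem_edges {w : H.Walk u u} (hw : w.IsCycle)
    (hu : H.connectedComponentMk u = c) (hxy : s(x, y) ∈ w.edges) : (twoCoreComp H c).Adj x y := by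
  have hsupport : ∀ v ∈ w.toSubgraph.spanningCoe.support, v ∈ w.support := by
    rintro v ⟨z, hz⟩
    exact w.mem_verts_toSubgraph.1
      (w.toSubgraph.edge_vert (show w.toSubgraph.Adj v z from hz))
  refine le_twoCoreComp w.toSubgraph.spanningCoe_le (fun v hv => ?_) (fun v hv => ?_) ?_
  · rw [← hu, SimpleGraph.ConnectedComponent.eq]
    exact ⟨(w.takeUntil v (hsupport v hv)).reverse⟩
  · exact (hw.ncard_neighborSet_toSubgraph_eq_two (hsupport v hv)).ge
  · rw [SimpleGraph.Subgraph.spanningCoe_adj, ← SimpleGraph.Subgraph.mem_edgeSet]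
    exact w.mem_edges_toSubgraph.2 hxy

variable [Finite V]

lemma two_le_ncard_of_mem_support (hv : v ∈ (twoCoreComp H c).support) :
    2 ≤ ((twoCoreComp H c).neighborSet v).ncard := by
  obtain ⟨u, hu⟩ := hv
  obtain ⟨C, hC, hvu⟩ := SimpleGraph.sSup_adj.1 hu
  exact (hC.2.2 v ⟨u, hvu⟩).trans
    (Set.ncard_le_ncard (fun y hy => SimpleGraph.sSup_adj.2 ⟨C, hC, hy⟩) (Set.toFinite _))

lemma survives_of_twoCoreComp_adj :
    ∀ (r : ℕ) {x y : V}, (twoCoreComp H c).Adj x y → Survives H r x y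
  | 0, _, _, _ => trivial
  | r + 1, x, y, h => by
    obtain ⟨z, hyz, hz⟩ := Set.exists_ne_of_one_lt_ncard
      (two_le_ncard_of_mem_support (c := c) ⟨x, h.symm⟩) x
    exact ⟨z, hz, twoCoreComp_le H c hyz, survives_of_twoCoreComp_adj r hyz⟩

end TwoCore

section LeadsTo

variable {V : Type} {H : SimpleGraph V} {S : Set V} {t t' u u' x y : V} {r : ℕ}

/-- There is a non-backtracking walk in `H` from `y` to `S` that does not start by
returning to `x`. -/
inductive LeadsTo (H : SimpleGraph V) (S : Set V) : V → V → Prop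
  | base {x y : V} : y ∈ S → LeadsTo H S x y
  | step {x y z : V} : z ≠ x → H.Adj y z → LeadsTo H S y z → LeadsTo H S x y

-- The edges leading to the 2-core in both directions could be added to the 2-core.
lemma twoCoreComp_adj_of_leadsTo [Finite V] {c : H.ConnectedComponent}
    (hx : H.connectedComponentMk x = c) (hxy : H.Adj x y)
    (h : LeadsTo H (twoCoreComp H c).support x y) (h' : LeadsTo H (twoCoreComp H c).support y x) :
    (twoCoreComp H c).Adj x y := by
  set S := (twoCoreComp H c).support
  let E : SimpleGraph V :=
    { Adj a b := H.Adj a b ∧ H.connectedComponentMk a = c ∧ LeadsTo H S a b ∧ LeadsTo H S b a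
      symm := ⟨fun a b ⟨hab, ha, h, h'⟩ =>
        ⟨hab.symm, SimpleGraph.ConnectedComponent.sound hab.reachable ▸ ha, h', h⟩⟩
      loopless := ⟨fun a ha => ha.1.ne rfl⟩ }
  have hle : twoCoreComp H c ⊔ E ≤ twoCoreComp H c := by
    refine le_twoCoreComp (sup_le (twoCoreComp_le H c) fun a b hab => hab.1) ?_ ?_
    · rintro v ⟨u, hu | hu⟩
      · exact connectedComponentMk_eq_of_mem_support ⟨u, hu⟩
      · exact hu.2.1
    · intro v hv
      by_cases hvS : v ∈ S
      · exact (two_le_ncard_of_mem_support hvS).trans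
          (Set.ncard_le_ncard (fun y hy => Or.inl hy) (Set.toFinite _))
      · obtain ⟨u, hu | ⟨hadj, hvc, hvu, huv⟩⟩ := hv
        · exact (hvS ⟨u, hu⟩).elim
        · cases huv with
          | base hmem => exact (hvS hmem).elim
          | @step _ _ z hz hvz hlead =>
            exact (Set.one_lt_ncard (Set.toFinite _)).2
              ⟨z, Or.inr ⟨hvz, hvc, hlead, .step hz.symm hadj hvu⟩,
                u, Or.inr ⟨hadj, hvc, hvu, .step hz hvz hlead⟩, hz⟩
  exact hle (Or.inr ⟨hxy, hx, h, h'⟩)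

/-- The graph `H` with all edges meeting `S` removed. -/
def awayFrom (H : SimpleGraph V) (S : Set V) : SimpleGraph V where
  Adj a b := H.Adj a b ∧ a ∉ S ∧ b ∉ S
  symm := ⟨fun _ _ h => ⟨h.1.symm, h.2.2, h.2.1⟩⟩
  loopless := ⟨fun _ h => h.1.ne rfl⟩

lemma awayFrom_le (H : SimpleGraph V) (S : Set V) : awayFrom H S ≤ H := fun _ _ h => h.1

lemma Survives.awayFrom : ∀ {r : ℕ} {x y : V}, Survives H r x y → ¬ LeadsTo H S x y →
    Survives (awayFrom H S) r x y
  | 0, _, _, _, _ => trivial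
  | _ + 1, _, _, ⟨z, hz, hyz, hs⟩, h =>
    have hlead : ¬ LeadsTo H S _ z := fun hl => h (.step hz hyz hl)
    ⟨z, hz, ⟨hyz, fun hy => h (.base hy), fun hzS => hlead (.base hzS)⟩, hs.awayFrom hlead⟩

lemma notMem_of_reachable_awayFrom (ht : t ∉ S) (h : (awayFrom H S).Reachable t u) : u ∉ S := by
  obtain ⟨w⟩ := h
  induction w with
  | nil => exact ht
  | cons h _ ih => exact ih h.2.2

lemma leadsTo_of_isPath (w : (awayFrom H S).Walk t t') (hw : w.IsPath) (h : H.Adj t' u')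
    (hu' : u' ∈ S) (hx : x ∉ w.support) (hxu : x ≠ u') : LeadsTo H S x t := by
  induction w generalizing x with
  | nil => exact .step hxu.symm h (.base hu')
  | @cons a b _ hab w ih =>
    obtain ⟨hw, ha⟩ := (SimpleGraph.Walk.cons_isPath_iff _ _).1 hw
    refine .step ?_ hab.1 (ih hw h ha fun hau => hab.2.1 (hau ▸ hu'))
    rintro rfl
    exact hx (by simp)

lemma leadsTo_of_reachable_awayFrom (ht : t ∉ S) (hu : u ∈ S)
    (hr : (awayFrom H S).Reachable t t') (h : H.Adj t' u') (hu' : u' ∈ S)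
    (hne : t ≠ t' ∨ u ≠ u') : LeadsTo H S u t := by
  obtain ⟨w, hw⟩ := hr.exists_isPath
  rcases eq_or_ne u u' with rfl | huu
  · cases w with
    | nil => simp at hne
    | cons hab w =>
      obtain ⟨hw, ha⟩ := (SimpleGraph.Walk.cons_isPath_iff _ _).1 hw
      refine .step ?_ hab.1 (leadsTo_of_isPath w hw h hu ha fun htu => ht (htu ▸ hu))
      rintro rfl
      exact hab.2.2 hu
  · refine leadsTo_of_isPath w hw h hu' (fun hmem => ?_) huu
    exact notMem_of_reachable_awayFrom ht ⟨w.takeUntil u hmem⟩ hu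

end LeadsTo

section Trunks

variable {V : Type} [Fintype V] {G H : SimpleGraph V} {S : Set V} {K : ℕ} {t u : V}

/-- The edges from components of `awayFrom H S` with at least `K` vertices to `S`, as pairs. -/
def trunkPairs (H : SimpleGraph V) (S : Set V) (K : ℕ) : Finset (V × V) :=
  Finset.univ.filter fun e =>
    H.Adj e.1 e.2 ∧ e.1 ∈ largeCompVerts (awayFrom H S) K ∧ e.1 ∉ S ∧ e.2 ∈ S

lemma mem_trunkPairs : (t, u) ∈ trunkPairs H S K ↔
    H.Adj t u ∧ t ∈ largeCompVerts (awayFrom H S) K ∧ t ∉ S ∧ u ∈ S := by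
  simp only [trunkPairs, Finset.mem_filter, Finset.mem_univ, true_and]

/-- The edges joining `S` to the components of `awayFrom H S` with at least `K` vertices. -/
def trunkEdges (H : SimpleGraph V) (S : Set V) (K : ℕ) : Finset (Sym2 V) :=
  (trunkPairs H S K).image fun e => s(e.1, e.2)

lemma mem_trunkEdges_of_adj (h : H.Adj t u) (ht : t ∈ largeCompVerts (awayFrom H S) K)
    (htS : t ∉ S) (hu : u ∈ S) : s(t, u) ∈ trunkEdges H S K :=
  Finset.mem_image.2 ⟨(t, u), mem_trunkPairs.2 ⟨h, ht, htS, hu⟩, rfl⟩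

lemma trunkEdges_subset (hHG : H ≤ G) (S : Set V) (K : ℕ) :
    trunkEdges H S K ⊆ edgeFinset' G := fun e he => by
  obtain ⟨⟨t, u⟩, h, rfl⟩ := Finset.mem_image.1 he
  exact mem_edgeFinset'.2 (hHG (mem_trunkPairs.1 h).1)

-- Two edges joining a component outside the 2-core to the 2-core would belong to the 2-core.
lemma card_trunkEdges_mul_le (H : SimpleGraph V) (c : H.ConnectedComponent) (K : ℕ) :
    (trunkEdges H (twoCoreComp H c).support K).card * K ≤ Fintype.card V := by
  set S := (twoCoreComp H c).support
  refine (Nat.mul_le_mul_right K ?_).trans (card_largeComps_mul_le (awayFrom H S) K)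
  refine Finset.card_image_le.trans
    (Finset.card_le_card_of_injOn (fun e => (awayFrom H S).connectedComponentMk e.1) ?_ ?_)
  · rintro ⟨t, u⟩ he
    exact Finset.mem_coe.2 (Finset.mem_filter.2 ⟨Finset.mem_univ _,
      mem_largeCompVerts.1 (mem_trunkPairs.1 (Finset.mem_coe.1 he)).2.1⟩)
  · rintro ⟨t, u⟩ he ⟨t', u'⟩ he' hcomp
    obtain ⟨h, -, ht, hu⟩ := mem_trunkPairs.1 (Finset.mem_coe.1 he)
    obtain ⟨h', -, -, hu'⟩ := mem_trunkPairs.1 (Finset.mem_coe.1 he')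
    by_contra hne
    have hne : t ≠ t' ∨ u ≠ u' := by
      rwa [Prod.mk.injEq, not_and_or] at hne
    have hlead := leadsTo_of_reachable_awayFrom ht hu
      (SimpleGraph.ConnectedComponent.exact hcomp) h' hu' hne
    have hcore := twoCoreComp_adj_of_leadsTo (connectedComponentMk_eq_of_mem_support hu) h.symm
      hlead (.base hu)
    exact ht ⟨u, hcore.symm⟩

end Trunks

/-! ### Degrees in the 2-core of the largest component -/

section LargestComponent

variable {V : Type} {H H' : SimpleGraph V} {c₀ c₁ : H.ConnectedComponent}
  {d j r : ℕ} {m : ℝ} {v x y : V} {W Y : Finset V}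

lemma Survives.of_isPath : ∀ {r : ℕ} {x y u : V} (w : H.Walk y u), w.IsPath → x ∉ w.support →
    r ≤ w.length → Survives H r x y
  | 0, _, _, _, _, _, _, _ => trivial
  | r + 1, x, _, _, .cons hyz w, hw, hx, h =>
    have ⟨hw, hy⟩ := (SimpleGraph.Walk.cons_isPath_iff _ _).1 hw
    ⟨_, fun hz => hx (by simp [← hz]), hyz, .of_isPath w hw hy (by simpa using h)⟩

variable [Fintype V]

lemma mem_survivingVerts_of_card_lt (hdeg : ∀ v, H.degree v ≤ d)
    (h : (d + 1) ^ j < (compVerts H (H.connectedComponentMk v)).card) :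
    v ∈ survivingVerts H j := by
  have hball : (thickening H {v} j).card ≤ (d + 1) ^ j := by
    simpa using card_thickening_le hdeg {v} j
  obtain ⟨u, hu, hfar⟩ := Finset.exists_mem_notMem_of_card_lt_card (hball.trans_lt h)
  obtain ⟨w, hw⟩ := (mem_compVerts_mk.1 hu).exists_isPath
  have hl : j < w.length := not_le.1 fun hl =>
    hfar (mem_thickening.2 ⟨v, Finset.mem_singleton_self v, w, hl⟩)
  cases w with
  | nil => simp at hl
  | cons hvy w =>
    obtain ⟨hw, hv⟩ := (SimpleGraph.Walk.cons_isPath_iff _ _).1 hw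
    exact mem_survivingVerts.2 ⟨_, hvy, .of_isPath w hw hv (Nat.lt_succ_iff.1 hl)⟩

lemma sub_lt_card_compVerts (hc₁ : IsLargestComp H c₁)
    (hc₀ : ((Y \ compVerts H c₀).card : ℝ) < m) : Y.card - m < (compVerts H c₁).card := by
  have hsum : ((Y ∩ compVerts H c₀).card : ℝ) + (Y \ compVerts H c₀).card = Y.card :=
    mod_cast Finset.card_inter_add_card_sdiff Y (compVerts H c₀)
  have hle : ((Y ∩ compVerts H c₀).card : ℝ) ≤ (compVerts H c₁).card :=
    mod_cast (Finset.card_le_card Finset.inter_subset_right).trans (hc₁ c₀)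
  linarith

lemma eq_of_card_sdiff_lt (hW : compVerts H c₁ ⊆ W) (hWY : ((W \ Y).card : ℝ) ≤ m)
    (hc₀ : ((Y \ compVerts H c₀).card : ℝ) < m) (hc₁ : 2 * m ≤ (compVerts H c₁).card) :
    c₀ = c₁ := by
  by_contra hne
  have hcover : compVerts H c₁ ⊆ (W \ Y) ∪ (Y \ compVerts H c₀) := fun v hv => by
    have hv₀ : v ∉ compVerts H c₀ := fun h => hne ((mem_compVerts.1 h).symm.trans
      (mem_compVerts.1 hv))
    by_cases hY : v ∈ Y
    · exact Finset.mem_union_right _ (Finset.mem_sdiff.2 ⟨hY, hv₀⟩)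
    · exact Finset.mem_union_left _ (Finset.mem_sdiff.2 ⟨hW hv, hY⟩)
  have hcard : ((compVerts H c₁).card : ℝ) ≤ (W \ Y).card + (Y \ compVerts H c₀).card :=
    mod_cast (Finset.card_le_card hcover).trans (Finset.card_union_le _ _)
  linarith

lemma compVerts_subset_largestComp {c : H'.ConnectedComponent} (hle : H' ≤ H)
    (hdeg : ∀ v, H.degree v ≤ d) (hc₁ : IsLargestComp H c₁)
    (hc : ((Y \ compVerts H' c).card : ℝ) < m) (hY : 3 * m ≤ Y.card)
    (hW : ((survivingVerts H j \ Y).card : ℝ) ≤ m) (hball : ((d + 1) ^ j : ℕ) < Y.card - m) :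
    compVerts H' c ⊆ compVerts H c₁ := by
  obtain ⟨a, rfl⟩ := c.exists_rep
  have hsub : compVerts H' (H'.connectedComponentMk a)
      ⊆ compVerts H (H.connectedComponentMk a) := fun u hu =>
    mem_compVerts_mk.2 ((mem_compVerts_mk.1 hu).mono hle)
  have hc₀ : ((Y \ compVerts H (H.connectedComponentMk a)).card : ℝ) < m :=
    lt_of_le_of_lt (mod_cast Finset.card_le_card (Finset.sdiff_subset_sdiff subset_rfl hsub)) hc
  have hlarge := sub_lt_card_compVerts hc₁ hc₀
  have hsurv : compVerts H c₁ ⊆ survivingVerts H j := fun v hv =>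
    mem_survivingVerts_of_card_lt hdeg <| by
      rw [mem_compVerts.1 hv]
      exact_mod_cast hball.trans hlarge
  exact eq_of_card_sdiff_lt hsurv hW hc₀ (by linarith) ▸ hsub

lemma exists_mem_compVerts_mem_support {c : H'.ConnectedComponent} (hle : H' ≤ H)
    (hsub : compVerts H' c ⊆ compVerts H c₁) (hdeg : ∀ v, H.degree v ≤ d)
    (hc : ((Y \ compVerts H' c).card : ℝ) < m) (hm : 1 ≤ m) (hY : 1 + (d + 3) * m ≤ Y.card)
    (hU : ∀ v w, H'.Adj v w → Unsplit (H'.deleteEdges {s(v, w)}) Y m) :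
    ∃ v ∈ compVerts H' c, v ∈ (twoCoreComp H c₁).support := by
  obtain ⟨v, w, hvw, hvc, hr⟩ := exists_adj_not_bridge
    (fun v => (SimpleGraph.degree_le_of_le hle).trans (hdeg v)) hc hm hY hU
  obtain ⟨z, p, hp, hmem⟩ :=
    SimpleGraph.adj_and_reachable_delete_edges_iff_exists_cycle.1 ⟨hvw, hr⟩
  have hz : H.connectedComponentMk z = c₁ := by
    rw [← mem_compVerts.1 (hsub hvc), SimpleGraph.ConnectedComponent.eq]
    exact ⟨(p.takeUntil v (p.fst_mem_support_of_mem_edges hmem)).mapLe hle⟩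
  refine ⟨v, hvc, w, twoCoreComp_adj_of_mem_edges (hp.mapLe hle) hz ?_⟩
  rwa [SimpleGraph.Walk.edges_mapLe_eq_edges]

end LargestComponent

section CoreDegree

variable {V : Type} [Fintype V] {G H H₁ : SimpleGraph V} {S : Set V} {C Y : Finset V}
  {d j k r : ℕ} {m : ℝ} {v x y z : V} {c₁ : H.ConnectedComponent}

-- Otherwise `y` lies in a component of `awayFrom H S` with more than `r` vertices, all edges from
-- which to `S` have been removed.
lemma leadsTo_of_survives (hHG : H ≤ G) (hg : r + 2 < G.girth) (hxy : H.Adj x y)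
    (hs : Survives H r x y) (hz : z ∈ S)
    (hyz : (H.deleteEdges (trunkEdges H S (r + 1) : Set (Sym2 V))).Reachable y z) :
    LeadsTo H S x y := by
  by_contra hlead
  have hy : y ∉ S := fun h => hlead (.base h)
  have hlarge : y ∈ largeCompVerts (awayFrom H S) (r + 1) :=
    (hs.awayFrom hlead).mem_largeCompVerts ((awayFrom_le H S).trans hHG) (hHG hxy) hg
  have hclosed : IsUnionOfComps (H.deleteEdges (trunkEdges H S (r + 1) : Set (Sym2 V)))
      (compVerts (awayFrom H S) ((awayFrom H S).connectedComponentMk y)) := by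
    intro a b ha hab
    rw [SimpleGraph.deleteEdges_adj, Finset.mem_coe] at hab
    have haS := notMem_of_reachable_awayFrom hy (mem_compVerts_mk.1 ha)
    have hbS : b ∉ S := fun hb => hab.2 <| mem_trunkEdges_of_adj hab.1
      ((isUnionOfComps_largeCompVerts _ _).mem_of_reachable hlarge (mem_compVerts_mk.1 ha)) haS hb
    exact isUnionOfComps_compVerts _ _ a b ha ⟨hab.1, haS, hbS⟩
  have hzy := compVerts_subset hclosed (mem_compVerts_mk.2 .rfl) (mem_compVerts_mk.2 hyz)
  exact notMem_of_reachable_awayFrom hy (mem_compVerts_mk.1 hzy) hz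

lemma neighborSet_twoCoreComp_subset (H : SimpleGraph V) (c : H.ConnectedComponent) (r : ℕ)
    (v : V) : (twoCoreComp H c).neighborSet v ⊆ aliveNeighbors H r v := fun _ hy =>
  Finset.mem_coe.2 (mem_aliveNeighbors.2 ⟨twoCoreComp_le H c hy, survives_of_twoCoreComp_adj r hy⟩)

lemma neighborSet_twoCoreComp_eq (hH₁ : H₁ ≤ H) (hjr : j ≤ r)
    (hcore : ∀ x ∈ C, ∀ y ∈ C, H.Adj x y → Survives H r x y → Survives H r y x →
      (twoCoreComp H c₁).Adj x y)
    (hv : v ∉ survivingVerts H₁ j \ C)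
    (hnbr : ∀ y, H₁.Adj v y → y ∉ survivingVerts H₁ j \ C)
    (heq : aliveNeighbors H₁ r v = aliveNeighbors H r v)
    (htwo : 2 ≤ (aliveNeighbors H r v).card) :
    (twoCoreComp H c₁).neighborSet v = aliveNeighbors H r v := by
  refine (neighborSet_twoCoreComp_subset H c₁ r v).antisymm fun y hy => ?_
  rw [← heq] at hy htwo
  obtain ⟨hvy, hs⟩ := mem_aliveNeighbors.1 (Finset.mem_coe.1 hy)
  obtain ⟨z, hz, hzy⟩ := Finset.exists_mem_ne htwo y
  obtain ⟨hvz, hsz⟩ := mem_aliveNeighbors.1 hz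
  have hs' : Survives H₁ r y v := Survives.of_succ ⟨z, hzy, hvz, hsz⟩
  have hvC : v ∈ C := by_contra fun h =>
    hv (Finset.mem_sdiff.2 ⟨mem_survivingVerts.2 ⟨y, hvy, hs.of_le hjr⟩, h⟩)
  have hyC : y ∈ C := by_contra fun h =>
    hnbr y hvy (Finset.mem_sdiff.2 ⟨mem_survivingVerts.2 ⟨v, hvy.symm, hs'.of_le hjr⟩, h⟩)
  exact hcore v hvC y hyC (hH₁ hvy) (hs.mono hH₁) (hs'.mono hH₁)

lemma ncard_neighborSet_twoCoreComp_eq_iff (hk : 2 ≤ k)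
    (h : 2 ≤ (aliveNeighbors H r v).card →
      (twoCoreComp H c₁).neighborSet v = aliveNeighbors H r v) :
    ((twoCoreComp H c₁).neighborSet v).ncard = k ↔ (aliveNeighbors H r v).card = k := by
  by_cases htwo : 2 ≤ (aliveNeighbors H r v).card
  · rw [h htwo, Set.ncard_coe_finset]
  · have hle := Set.ncard_le_ncard (neighborSet_twoCoreComp_subset H c₁ r v) (Set.toFinite _)
    rw [Set.ncard_coe_finset] at hle
    lia

lemma abs_card_filter_sub_card_filter_le {P Q : V → Prop} [DecidablePred P] [DecidablePred Q]
    {B : Finset V} (h : ∀ v ∉ B, P v ↔ Q v) :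
    |((Finset.univ.filter P).card : ℝ) - (Finset.univ.filter Q).card| ≤ B.card := by
  have hle : ∀ {P Q : V → Prop} [DecidablePred P] [DecidablePred Q], (∀ v ∉ B, P v ↔ Q v) →
      ((Finset.univ.filter P).card : ℝ) ≤ (Finset.univ.filter Q).card + B.card := by
    intro P Q _ _ h
    have hsub : Finset.univ.filter P ⊆ Finset.univ.filter Q ∪ B := fun v hv => by
      have := h v
      simp only [Finset.mem_union, Finset.mem_filter, Finset.mem_univ, true_and] at *
      tauto
    exact_mod_cast (Finset.card_le_card hsub).trans (Finset.card_union_le _ _)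
  rw [abs_sub_le_iff]
  constructor
  · linarith [hle h]
  · linarith [hle fun v hv => (h v hv).symm]

lemma abs_card_filter_sub_le_of_forall_adj {P Q R : V → Prop} [DecidablePred P]
    [DecidablePred Q] [DecidablePred R] {N : Finset V} (hdeg : ∀ v, G.degree v ≤ d)
    (hN : (N.card : ℝ) ≤ m)
    (h : ∀ v, R v → v ∉ N → (∀ y, G.Adj v y → y ∉ N) → (P v ↔ Q v)) :
    |((Finset.univ.filter P).card : ℝ) - (Finset.univ.filter Q).card|
      ≤ (Finset.univ.filter fun v => ¬ R v).card + (d + 1) * m := by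
  set A := Finset.univ.filter fun v => ¬ R v
  set B := A ∪ (N ∪ N.biUnion fun v => G.neighborFinset v)
  have hB : B.card ≤ A.card + (N.card + N.card * d) :=
    (Finset.card_union_le _ _).trans (Nat.add_le_add_left ((Finset.card_union_le _ _).trans
      (Nat.add_le_add_left (Finset.card_biUnion_le_card_mul _ _ _ fun v _ => hdeg v) _)) _)
  have hPQ : ∀ v ∉ B, P v ↔ Q v := fun v hv => by
    obtain ⟨hA, hv⟩ := not_or.1 (Finset.mem_union.not.1 hv)
    obtain ⟨hN, hv⟩ := not_or.1 (Finset.mem_union.not.1 hv)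
    exact h v (by_contra fun hR => hA (Finset.mem_filter.2 ⟨Finset.mem_univ v, hR⟩)) hN
      fun y hvy hy => hv (Finset.mem_biUnion.2 ⟨y, hy, (G.mem_neighborFinset _ _).2 hvy.symm⟩)
  calc |((Finset.univ.filter P).card : ℝ) - (Finset.univ.filter Q).card|
      ≤ B.card := abs_card_filter_sub_card_filter_le hPQ
    _ ≤ A.card + (N.card + N.card * d) := mod_cast hB
    _ = A.card + (d + 1) * N.card := by ring
    _ ≤ A.card + (d + 1) * m := by gcongr

/-- `H` leaves `Y` unsplit, and still does so after removing any `N` edges. -/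
def RobustlyUnsplit (H : SimpleGraph V) (Y : Finset V) (m N : ℝ) : Prop :=
  ∀ F ⊆ edgeFinset' H, (F.card : ℝ) ≤ N → Unsplit (H.deleteEdges (F : Set (Sym2 V))) Y m

lemma RobustlyUnsplit.exists_core_comp {N : ℝ} {F : Finset (Sym2 V)}
    (hU : RobustlyUnsplit H Y m N) (hF : F ⊆ edgeFinset' H) (hFN : (F.card : ℝ) + 1 ≤ N)
    (hdeg : ∀ v, H.degree v ≤ d) (hm : 1 ≤ m) (hY : 1 + (d + 3) * m ≤ Y.card)
    (hW : ((survivingVerts H j \ Y).card : ℝ) ≤ m) (hball : ((d + 1) ^ j : ℕ) < Y.card - m)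
    (hc₁ : IsLargestComp H c₁) :
    ∃ c : (H.deleteEdges (F : Set (Sym2 V))).ConnectedComponent,
      ((Y \ compVerts _ c).card : ℝ) < m ∧ compVerts _ c ⊆ compVerts H c₁ ∧
      ∃ x ∈ compVerts _ c, x ∈ (twoCoreComp H c₁).support := by
  have hY' : 3 * m ≤ (Y.card : ℝ) := by nlinarith [(d.cast_nonneg : (0 : ℝ) ≤ d)]
  have hle := H.deleteEdges_le (F : Set (Sym2 V))
  obtain ⟨c, hc⟩ := (hU F hF (by linarith)).exists_comp (by linarith) hY'
  have hsub := compVerts_subset_largestComp hle hdeg hc₁ hc hY' hW hball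
  refine ⟨c, hc, hsub, exists_mem_compVerts_mem_support hle hsub hdeg hc hm hY
    fun v w hvw => ?_⟩
  rw [SimpleGraph.deleteEdges_deleteEdges, Set.union_singleton, ← Finset.coe_insert]
  refine hU _ (Finset.insert_subset (mem_edgeFinset'.2 (hle hvw)) hF) ?_
  exact (Nat.cast_le.2 (Finset.card_insert_le _ _)).trans (by push_cast; exact hFN)

theorem abs_card_core_degree_sub_card_aliveNeighbors_le (hH₁ : H₁ ≤ H) (hHG : H ≤ G)
    (hdeg : ∀ v, G.degree v ≤ d) (hg : r + 2 < G.girth) (hjr : j ≤ r) (hm : 1 ≤ m)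
    (hU : RobustlyUnsplit H (survivingVerts H₁ j) m (Fintype.card V / (r + 1) + 1))
    (hY : 1 + (d + 3) * m ≤ (survivingVerts H₁ j).card)
    (hW : ((survivingVerts H j \ survivingVerts H₁ j).card : ℝ) ≤ m)
    (hball : ((d + 1) ^ j : ℕ) < (survivingVerts H₁ j).card - m)
    (hc₁ : IsLargestComp H c₁) (hk : 2 ≤ k) :
    |((Finset.univ.filter fun v => ((twoCoreComp H c₁).neighborSet v).ncard = k).card : ℝ)
        - (Finset.univ.filter fun v => (aliveNeighbors H r v).card = k).card|
      ≤ (Finset.univ.filter fun v => aliveNeighbors H₁ r v ≠ aliveNeighbors H r v).card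
        + (d + 1) * m := by
  set F := trunkEdges H (twoCoreComp H c₁).support (r + 1)
  have hF : (F.card : ℝ) + 1 ≤ Fintype.card V / (r + 1) + 1 := by
    rw [add_le_add_iff_right, le_div_iff₀ (by positivity)]
    exact_mod_cast card_trunkEdges_mul_le H c₁ (r + 1)
  obtain ⟨c, hc, hsub, z, hz, hzS⟩ := hU.exists_core_comp (trunkEdges_subset le_rfl _ _) hF
    (fun v => (SimpleGraph.degree_le_of_le hHG).trans (hdeg v)) hm hY hW hball hc₁
  have hlead : ∀ x y, H.Adj x y → Survives H r x y → y ∈ compVerts _ c →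
      LeadsTo H (twoCoreComp H c₁).support x y := fun x y hxy hs hy =>
    leadsTo_of_survives hHG hg hxy hs hzS
      (SimpleGraph.ConnectedComponent.exact ((mem_compVerts.1 hy).trans (mem_compVerts.1 hz).symm))
  exact abs_card_filter_sub_le_of_forall_adj hdeg hc.le fun v heq hv hnbr =>
    ncard_neighborSet_twoCoreComp_eq_iff hk <| neighborSet_twoCoreComp_eq hH₁ hjr
      (fun x hx y hy hxy h h' => twoCoreComp_adj_of_leadsTo (mem_compVerts.1 (hsub hx)) hxy
        (hlead x y hxy h hy) (hlead y x hxy.symm h' hx))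
      hv (fun y hvy => hnbr y (hHG (hH₁ hvy))) heq

end CoreDegree

/-! ### Survival probabilities of branches -/

section SurvivalProb

open Filter Topology

variable {d : ℕ} {p q η : ℝ}

-- The map is strictly convex and also fixes `1`, so it lies below the chord from `a` to `1`.
lemma pow_lt_of_fixed_lt {n : ℕ} {a x : ℝ} (hn : 2 ≤ n) (hp : 0 < p) (hp1 : p ≤ 1) (ha : 0 ≤ a)
    (hfix : a = (1 - p + p * a) ^ n) (hax : a < x) (hx : x < 1) : (1 - p + p * x) ^ n < x := by
  have h1a : 0 < 1 - a := by linarith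
  have hpa : 1 - p + p * a < 1 := by nlinarith
  have hbase : 0 ≤ 1 - p + p * a := by nlinarith
  have hchord := (strictConvexOn_pow hn).2 (Set.mem_Ici.2 hbase) (Set.mem_Ici.2 zero_le_one) hpa.ne
    (div_pos (sub_pos.2 hx) h1a) (div_pos (sub_pos.2 hax) h1a) (by field_simp; ring)
  have harg : (1 - x) / (1 - a) * (1 - p + p * a) + (x - a) / (1 - a) * 1 = 1 - p + p * x := by
    field_simp; ring
  have hval : (1 - x) / (1 - a) * a + (x - a) / (1 - a) * 1 = x := by
    field_simp; ring
  simp only [smul_eq_mul, one_pow] at hchord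
  rwa [← hfix, harg, hval] at hchord

lemma extinctionProb_nonneg (d : ℕ) (hp : 0 ≤ p) (hp1 : p ≤ 1) : ∀ r, 0 ≤ extinctionProb d p r
  | 0 => le_rfl
  | r + 1 => pow_nonneg
      (add_nonneg (sub_nonneg.2 hp1) (mul_nonneg hp (extinctionProb_nonneg d hp hp1 r))) _

lemma extinctionProb_le_of_map_le {x : ℝ} (hp : 0 ≤ p) (hp1 : p ≤ 1) (hx0 : 0 ≤ x)
    (hx : (1 - p + p * x) ^ (d - 1) ≤ x) : ∀ r, extinctionProb d p r ≤ x
  | 0 => hx0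
  | r + 1 => by
    have hnonneg := mul_nonneg hp (extinctionProb_nonneg d hp hp1 r)
    have hle := mul_le_mul_of_nonneg_left (extinctionProb_le_of_map_le hp hp1 hx0 hx r) hp
    exact (pow_le_pow_left₀ (by linarith) (by linarith) _).trans hx

lemma extinctionProb_monotone (d : ℕ) (hp : 0 ≤ p) (hp1 : p ≤ 1) :
    Monotone (extinctionProb d p) := by
  refine monotone_nat_of_le_succ fun r => ?_
  induction r with
  | zero => exact extinctionProb_nonneg d hp hp1 1
  | succ r ih =>
    have hnonneg := mul_nonneg hp (extinctionProb_nonneg d hp hp1 r)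
    have hle := mul_le_mul_of_nonneg_left ih hp
    exact pow_le_pow_left₀ (by linarith) (by linarith) _

lemma tendsto_extinctionProb (hd : 3 ≤ d) (hp : 0 < p) (hp1 : p ≤ 1) (hq0 : 0 ≤ q)
    (hq1 : q < 1) (hq : q = (1 - p + p * q) ^ (d - 1)) :
    Tendsto (extinctionProb d p) atTop (𝓝 q) := by
  have hle : ∀ r, extinctionProb d p r ≤ q := extinctionProb_le_of_map_le hp.le hp1 hq0 hq.ge
  have hlim := tendsto_atTop_ciSup (extinctionProb_monotone d hp.le hp1)
    ⟨q, Set.forall_mem_range.2 hle⟩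
  set L := ⨆ r, extinctionProb d p r
  have hL0 : 0 ≤ L := ge_of_tendsto' hlim (extinctionProb_nonneg d hp.le hp1)
  have hfix : L = (1 - p + p * L) ^ (d - 1) :=
    tendsto_nhds_unique ((tendsto_add_atTop_iff_nat 1).2 hlim)
      (((hlim.const_mul p).const_add (1 - p)).pow (d - 1))
  rcases (le_of_tendsto' hlim hle).eq_or_lt with h | h
  · exact h ▸ hlim
  · exact absurd (pow_lt_of_fixed_lt (by lia) hp hp1 hL0 hfix h hq1) hq.le.not_gt

/-- The probability that an edge is open and leads into a branch of the percolation on the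
`d`-regular tree that survives to depth `r`. -/
def branchProb (d : ℕ) (p : ℝ) (r : ℕ) : ℝ :=
  p * (1 - extinctionProb d p r)

lemma tendsto_branchProb (hd : 3 ≤ d) (hp : 0 < p) (hp1 : p ≤ 1) (hq0 : 0 ≤ q)
    (hq1 : q < 1) (hq : q = (1 - p + p * q) ^ (d - 1)) :
    Tendsto (branchProb d p) atTop (𝓝 (p * (1 - q))) :=
  ((tendsto_extinctionProb hd hp hp1 hq0 hq1 hq).const_sub 1).const_mul p

-- A point `x` slightly above `q` satisfies `(1 - p + p * x) ^ (d - 1) < x`, which persists for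
-- parameters near `p` and keeps their extinction probabilities below `x`.
lemma exists_lt_forall_le_branchProb (hd : 3 ≤ d) (hp : 0 < p) (hp1 : p ≤ 1) (hq0 : 0 ≤ q)
    (hq1 : q < 1) (hq : q = (1 - p + p * q) ^ (d - 1)) (hη : 0 < η) :
    ∃ p₁, 0 < p₁ ∧ p₁ < p ∧ ∀ r, p * (1 - q) - η ≤ branchProb d p₁ r := by
  obtain ⟨x, hqx, hx⟩ := exists_between (lt_min hq1 (show q < q + η / 2 by linarith))
  obtain ⟨hx1, hxη⟩ := lt_min_iff.1 hx
  have hmap : ∀ᶠ t in 𝓝 p, (1 - t + t * x) ^ (d - 1) < x :=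
    (show Continuous fun t : ℝ => (1 - t + t * x) ^ (d - 1) by fun_prop).continuousAt
      |>.eventually_lt_const (pow_lt_of_fixed_lt (by lia) hp hp1 hq0 hq hqx hx1)
  have hnear : ∀ᶠ t in 𝓝[<] p, max 0 (p - η / 2) < t :=
    (eventually_gt_nhds (max_lt hp (by linarith))).filter_mono nhdsWithin_le_nhds
  obtain ⟨p₁, ⟨hmap₁, hmax⟩, hlt⟩ :=
    ((hmap.filter_mono nhdsWithin_le_nhds).and hnear |>.and self_mem_nhdsWithin).exists
  obtain ⟨h0, hdiff⟩ := max_lt_iff.1 hmax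
  refine ⟨p₁, h0, hlt, fun r => ?_⟩
  have hext := extinctionProb_le_of_map_le h0.le (hlt.le.trans hp1) (hq0.trans hqx.le) hmap₁.le r
  calc p * (1 - q) - η ≤ p₁ * (1 - (q + η / 2)) := by nlinarith
    _ ≤ p₁ * (1 - extinctionProb d p₁ r) := by gcongr; linarith

/-- The probability that a binomial variable with parameters `n` and `x` equals `k`. -/
def binomialMass (n : ℕ) (x : ℝ) (k : ℕ) : ℝ :=
  n.choose k * x ^ k * (1 - x) ^ (n - k)

/-- The density `β_k`. -/
def coreDegreeDensity (d : ℕ) (p q : ℝ) (k : ℕ) : ℝ :=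
  (d.choose k : ℝ) * p ^ k * (1 - q) ^ k * q / (1 - p + p * q) ^ (k - 1)

lemma coreDegreeDensity_eq_binomialMass {k : ℕ} (hk1 : 1 ≤ k) (hkd : k ≤ d) (hp : 0 ≤ p)
    (hp1 : p < 1) (hq0 : 0 ≤ q) (hq : q = (1 - p + p * q) ^ (d - 1)) :
    coreDegreeDensity d p q k = binomialMass d (p * (1 - q)) k := by
  have hpos : 0 < 1 - p + p * q := add_pos_of_pos_of_nonneg (sub_pos.2 hp1) (mul_nonneg hp hq0)
  have hsplit : q = (1 - p + p * q) ^ (k - 1) * (1 - p + p * q) ^ (d - k) := by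
    rwa [← pow_add, show k - 1 + (d - k) = d - 1 by lia]
  rw [coreDegreeDensity, binomialMass, div_eq_iff (pow_pos hpos _).ne']
  calc (d.choose k : ℝ) * p ^ k * (1 - q) ^ k * q
      = d.choose k * p ^ k * (1 - q) ^ k
        * ((1 - p + p * q) ^ (k - 1) * (1 - p + p * q) ^ (d - k)) := by rw [← hsplit]
    _ = d.choose k * (p * (1 - q)) ^ k * (1 - p * (1 - q)) ^ (d - k)
        * (1 - p + p * q) ^ (k - 1) := by
        rw [show 1 - p * (1 - q) = 1 - p + p * q by ring, mul_pow]; ring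

lemma eventually_abs_binomialMass_sub_lt (hd : 3 ≤ d) (hp : 0 < p) (hp1 : p < 1) (hq0 : 0 ≤ q)
    (hq1 : q < 1) (hq : q = (1 - p + p * q) ^ (d - 1)) (hη : 0 < η) :
    ∀ᶠ r in atTop, ∀ k, 1 ≤ k → k ≤ d →
      |binomialMass d (branchProb d p r) k - coreDegreeDensity d p q k| < η := by
  have hlim := tendsto_branchProb hd hp hp1.le hq0 hq1 hq
  have hk : ∀ k ∈ Finset.range (d + 1), ∀ᶠ r in atTop,
      |binomialMass d (branchProb d p r) k - binomialMass d (p * (1 - q)) k| < η := fun k _ =>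
    Metric.tendsto_nhds.1
      (((hlim.pow k).const_mul (d.choose k : ℝ)).mul ((hlim.const_sub 1).pow (d - k))) η hη
  filter_upwards [(eventually_all_finset _).2 hk] with r hr k hk1 hkd
  rw [coreDegreeDensity_eq_binomialMass hk1 hkd hp.le hp1 hq0 hq]
  exact hr k (Finset.mem_range.2 (Nat.lt_succ_of_le hkd))

end SurvivalProb

/-! ### Typical percolation configurations -/

/-- The configuration `s` is typical at depth `r`: the total number of surviving branches and the
numbers of vertices with a given number of them are within `η n` of their expectations for
percolation with parameter `p` on a `d`-regular graph of large girth. -/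
structure TypicalAt {V : Type} [Fintype V] (G : SimpleGraph V) (d : ℕ) (p : ℝ) (r : ℕ) (η : ℝ)
    (s : Finset (Sym2 V)) : Prop where
  sum : |aliveSum G r Nat.cast s - Fintype.card V * (d * branchProb d p r)| < η * Fintype.card V
  count : ∀ k ≤ d,
    |((Finset.univ.filter fun v => (aliveNeighbors (openSubgraph G s) r v).card = k).card : ℝ)
        - Fintype.card V * binomialMass d (branchProb d p r) k| < η * Fintype.card V

section Typical

variable {V : Type} [Fintype V] {G : SimpleGraph V} {r : ℕ} {p η : ℝ}

lemma bernoulliMean_aliveSum {φ : ℕ → ℝ} {a : ℝ} (h : ∀ v, bernoulliMean p (edgeFinset' G)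
      (fun s => φ (aliveNeighbors (openSubgraph G s) r v).card) = a) :
    bernoulliMean p (edgeFinset' G) (aliveSum G r φ) = Fintype.card V * a := by
  refine (bernoulliMean_sum p _ Finset.univ fun v s =>
    φ (aliveNeighbors (openSubgraph G s) r v).card).trans ?_
  simp only [h, Finset.sum_const, Finset.card_univ, nsmul_eq_mul]

lemma exists_not_typicalAt_bound (d r : ℕ) (h0 : 0 ≤ p) (h1 : p ≤ 1) (hη : 0 < η) :
    ∃ c > 0, ∀ (V : Type) [Fintype V] (G : SimpleGraph V), G.IsRegularOfDegree d →
      2 * r + 2 < G.girth → bernoulliProb p (edgeFinset' G) (fun s => ¬ TypicalAt G d p r η s)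
        ≤ (2 * d + 4) * Real.exp (-c * Fintype.card V) := by
  obtain ⟨c, hc, hconc⟩ := exists_aliveSum_concentration d r h0 h1
    (show (0 : ℝ) ≤ d + 1 by positivity) hη
  refine ⟨c, hc, fun V _ G hG hg => ?_⟩
  have hdeg : ∀ v, G.degree v ≤ d := fun v => (hG v).le
  have hsum := hconc V G hdeg Nat.cast fun k hk =>
    ⟨Nat.cast_nonneg k, (Nat.cast_le.2 hk).trans (le_add_of_nonneg_right zero_le_one)⟩
  have hcount := fun k => hconc V G hdeg (fun a => if a = k then 1 else 0) fun a _ => by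
    split_ifs
    exacts [⟨zero_le_one, le_add_of_nonneg_left d.cast_nonneg⟩, ⟨le_rfl, by positivity⟩]
  rw [bernoulliMean_aliveSum (bernoulliMean_card_aliveNeighbors hG p hg)] at hsum
  have hmean : ∀ k, bernoulliMean p (edgeFinset' G) (aliveSum G r fun a => if a = k then 1 else 0)
      = Fintype.card V * binomialMass d (branchProb d p r) k := fun k =>
    bernoulliMean_aliveSum fun v =>
      (bernoulliMean_ite p _ _).trans (bernoulliProb_card_aliveNeighbors_eq hG p hg v k)
  simp only [hmean, aliveSum, Finset.sum_boole] at hcount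
  refine (bernoulliProb_mono h0 h1 fun s _ hs => ?_).trans ((bernoulliProb_or_le h0 h1 _ _).trans
    ((add_le_add hsum (bernoulliProb_exists_le_card_mul h0 h1 (I := Finset.range (d + 1))
      fun k _ => hcount k)).trans_eq ?_))
  · contrapose! hs
    exact ⟨hs.1, fun k hk => hs.2 k (Finset.mem_range.2 (Nat.lt_succ_of_le hk))⟩
  · rw [Finset.card_range]
    push_cast
    ring

lemma exists_not_forall_typicalAt_bound (d r : ℕ) (h0 : 0 ≤ p) (h1 : p ≤ 1) (hη : 0 < η) :
    ∃ c > 0, ∀ (V : Type) [Fintype V] (G : SimpleGraph V), G.IsRegularOfDegree d →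
      2 * r + 2 < G.girth →
        bernoulliProb p (edgeFinset' G) (fun s => ¬ ∀ i ≤ r, TypicalAt G d p i η s)
          ≤ (r + 1) * (2 * d + 4) * Real.exp (-c * Fintype.card V) := by
  choose c hc hbound using fun i => exists_not_typicalAt_bound d i h0 h1 hη
  have hne : (Finset.range (r + 1)).Nonempty := Finset.nonempty_range_add_one
  refine ⟨(Finset.range (r + 1)).inf' hne c, (Finset.lt_inf'_iff hne).2 fun i _ => hc i,
    fun V _ G hG hg => ?_⟩
  set c' := (Finset.range (r + 1)).inf' hne c
  have hi : ∀ i ∈ Finset.range (r + 1),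
      bernoulliProb p (edgeFinset' G) (fun s => ¬ TypicalAt G d p i η s)
        ≤ (2 * d + 4) * Real.exp (-c' * Fintype.card V) := fun i hi => by
    have hlt := Finset.mem_range.1 hi
    refine (hbound i V G hG (by lia)).trans ?_
    have hle : c' ≤ c i := Finset.inf'_le c hi
    gcongr
  refine (bernoulliProb_mono h0 h1 fun s _ hs => ?_).trans
    ((bernoulliProb_exists_le_card_mul h0 h1 hi).trans_eq ?_)
  · simp only [not_forall] at hs
    obtain ⟨i, hir, hs⟩ := hs
    exact ⟨i, Finset.mem_range.2 (Nat.lt_succ_of_le hir), hs⟩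
  · rw [Finset.card_range]
    push_cast
    ring

end Typical

/-! ### From typical configurations to core degrees -/

section Deterministic

variable {V : Type}

lemma openSubgraph_sdiff (G : SimpleGraph V) (s F : Finset (Sym2 V)) :
    openSubgraph G (s \ F) = (openSubgraph G s).deleteEdges (F : Set (Sym2 V)) := by
  ext x y
  simp only [openSubgraph_adj, SimpleGraph.deleteEdges_adj, Finset.mem_sdiff, Finset.mem_coe,
    and_assoc]

variable [Fintype V] {G : SimpleGraph V} {d j r K : ℕ} {p p₁ T ε η τ δ N : ℝ}
  {s t u : Finset (Sym2 V)}

lemma card_filter_aliveNeighbors_ne_le (G : SimpleGraph V) (hsu : s ⊆ u) (r : ℕ) :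
    ((Finset.univ.filter fun v => aliveNeighbors (openSubgraph G s) r v
        ≠ aliveNeighbors (openSubgraph G u) r v).card : ℝ)
      ≤ aliveSum G r Nat.cast u - aliveSum G r Nat.cast s := by
  rw [aliveSum, aliveSum, ← Finset.sum_sub_distrib, Finset.card_filter, Nat.cast_sum]
  refine Finset.sum_le_sum fun v _ => ?_
  have hsub := aliveNeighbors_mono (openSubgraph_mono G hsu) r v
  rw [le_sub_iff_add_le]
  split_ifs with h
  · exact_mod_cast Nat.succ_le_of_lt (Finset.card_lt_card (hsub.ssubset_of_ne h)) |>.trans_eq' (by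
      rw [Nat.succ_eq_add_one, add_comm])
  · exact_mod_cast (zero_add _).trans_le (Finset.card_le_card hsub)

lemma survivingVerts_sdiff_subset (H H' : SimpleGraph V) (j : ℕ) :
    survivingVerts H' j \ survivingVerts H j
      ⊆ Finset.univ.filter fun v => aliveNeighbors H j v ≠ aliveNeighbors H' j v := fun v hv => by
  simp only [survivingVerts, Finset.mem_sdiff, Finset.mem_filter, Finset.mem_univ, true_and]
    at hv ⊢
  exact fun h => hv.2 (h ▸ hv.1)

lemma aliveSum_natCast_le (hdeg : ∀ v, G.degree v ≤ d) (s : Finset (Sym2 V)) (j : ℕ) :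
    aliveSum G j Nat.cast s ≤ d * (survivingVerts (openSubgraph G s) j).card := by
  rw [aliveSum, survivingVerts, Finset.card_filter, Nat.cast_sum, Finset.mul_sum]
  refine Finset.sum_le_sum fun v _ => ?_
  split_ifs with h
  · simpa using card_aliveNeighbors_le (openSubgraph_le G s) hdeg j v
  · simp [Finset.not_nonempty_iff_eq_empty.1 h]

lemma TypicalAt.aliveSum_sub_le (hs : TypicalAt G d p₁ r η s) (hu : TypicalAt G d p r η u)
    (hd : 1 ≤ d) (hlow : T - η ≤ branchProb d p₁ r) (hup : branchProb d p r ≤ T + η) :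
    aliveSum G r Nat.cast u - aliveSum G r Nat.cast s ≤ 4 * d * η * Fintype.card V := by
  have hηn : 0 < η * Fintype.card V := (abs_nonneg _).trans_lt hs.sum
  have hd' : (1 : ℝ) ≤ d := Nat.one_le_cast.2 hd
  have hgap : Fintype.card V * (d * (branchProb d p r - branchProb d p₁ r))
      ≤ Fintype.card V * (d * (2 * η)) := by gcongr; linarith
  linarith [(abs_lt.1 hs.sum).1, (abs_lt.1 hu.sum).2, mul_le_mul_of_nonneg_right hd' hηn.le]

lemma TypicalAt.le_card_survivingVerts (hs : TypicalAt G d p j η s)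
    (hdeg : ∀ v, G.degree v ≤ d) (hd : 1 ≤ d) (hlow : T - η ≤ branchProb d p j) :
    (T - 2 * η) * Fintype.card V ≤ (survivingVerts (openSubgraph G s) j).card := by
  have hηn : 0 < η * Fintype.card V := (abs_nonneg _).trans_lt hs.sum
  have hd' : (1 : ℝ) ≤ d := Nat.one_le_cast.2 hd
  have hmean : Fintype.card V * (d * (T - η)) ≤ Fintype.card V * (d * branchProb d p j) := by
    gcongr
  refine le_of_mul_le_mul_left ?_ (zero_lt_one.trans_le hd')
  linarith [(abs_lt.1 hs.sum).1, aliveSum_natCast_le hdeg s j,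
    mul_le_mul_of_nonneg_right hd' hηn.le]

lemma robustlyUnsplit_of_not_badSplit (hbad : ¬ BadSplit G K τ δ s t)
    (hdeg : ∀ v, G.degree v ≤ d) (hK : K ≤ j + 1) (hg : j + 2 < G.girth)
    (hN : N * (2 * (d + 1) ^ (j + 1)) ≤ min τ δ * Fintype.card V) :
    RobustlyUnsplit (openSubgraph G (s ∪ t)) (survivingVerts (openSubgraph G s) j)
      (2 * (δ * Fintype.card V)) N := fun F hF hFN => by
  have hball : (F.card : ℝ) * (2 * (d + 1) ^ (j + 1)) ≤ min τ δ * Fintype.card V :=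
    (mul_le_mul_of_nonneg_right hFN (by positivity)).trans hN
  have hone : (1 : ℝ) ≤ 2 * (d + 1) ^ (j + 1) :=
    one_le_mul_of_one_le_of_one_le one_le_two (one_le_pow₀ (le_add_of_nonneg_left d.cast_nonneg))
  rw [← openSubgraph_sdiff]
  refine unsplit_of_not_badSplit hbad hK hg (hF.trans fun e he => ?_) ?_ ?_
  · induction e with
    | h x y => exact mem_edgeFinset'.2 (openSubgraph_le G _ (mem_edgeFinset'.1 he))
  · exact (le_mul_of_one_le_right (Nat.cast_nonneg _) hone).trans
      (hball.trans (mul_le_mul_of_nonneg_right (min_le_left τ δ) (Nat.cast_nonneg _)))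
  · calc ((affectedVerts G (j + 1) F).card : ℝ) ≤ F.card * (2 * (d + 1) ^ (j + 1)) := by
          exact_mod_cast (card_affectedVerts_le hdeg (j + 1) F).trans_eq (mul_assoc _ _ _)
      _ ≤ min τ δ * Fintype.card V := hball
      _ ≤ δ * Fintype.card V :=
          mul_le_mul_of_nonneg_right (min_le_right τ δ) (Nat.cast_nonneg _)

/-- The configurations `s` and `s ∪ t` are typical at all depths up to `r`, and `t` links the
large components of `s`. -/
structure GoodSample (G : SimpleGraph V) (d K r : ℕ) (p₁ p η τ δ : ℝ)
    (s t : Finset (Sym2 V)) : Prop where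
  typicalAt_left : ∀ i ≤ r, TypicalAt G d p₁ i η s
  typicalAt_union : ∀ i ≤ r, TypicalAt G d p i η (s ∪ t)
  not_badSplit : ¬ BadSplit G K τ δ s t

lemma GoodSample.card_aliveNeighbors_ne_le (h : GoodSample G d K r p₁ p η τ δ s t)
    (hd : 1 ≤ d) (hη : 4 * d * η = ε) (hjr : j ≤ r) (hlow : T - η ≤ branchProb d p₁ j)
    (hup : branchProb d p j ≤ T + η) :
    ((Finset.univ.filter fun v => aliveNeighbors (openSubgraph G s) j v
        ≠ aliveNeighbors (openSubgraph G (s ∪ t)) j v).card : ℝ) ≤ ε * Fintype.card V :=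
  hη ▸ (card_filter_aliveNeighbors_ne_le G Finset.subset_union_left j).trans
    ((h.typicalAt_left j hjr).aliveSum_sub_le (h.typicalAt_union j hjr) hd hlow hup)

lemma GoodSample.abs_card_core_degree_sub_le (h : GoodSample G d K r p₁ p η τ (ε / 2) s t)
    (hG : G.IsRegularOfDegree d) (hd : 1 ≤ d) (hη : 4 * d * η = ε) (hεT : (d + 5) * ε ≤ T)
    (hlow : ∀ i, T - η ≤ branchProb d p₁ i) (hup : ∀ i ≥ j, branchProb d p i ≤ T + η)
    (hK : K ≤ j + 1) (hjr : j ≤ r) (hg : 2 * r + 2 < G.girth)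
    (hN : ((Fintype.card V : ℝ) / (r + 1) + 1) * (2 * (d + 1) ^ (j + 1))
      ≤ min τ (ε / 2) * Fintype.card V)
    (hball : (d + 1 : ℝ) ^ j < min τ (ε / 2) * Fintype.card V)
    {c₁ : (openSubgraph G (s ∪ t)).ConnectedComponent}
    (hc₁ : IsLargestComp (openSubgraph G (s ∪ t)) c₁) {k : ℕ} (hk : 2 ≤ k) :
    |((Finset.univ.filter fun v =>
          ((twoCoreComp (openSubgraph G (s ∪ t)) c₁).neighborSet v).ncard = k).card : ℝ)
        - (Finset.univ.filter fun v => (aliveNeighbors (openSubgraph G (s ∪ t)) r v).card = k).card|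
      ≤ (d + 2) * (ε * Fintype.card V) := by
  have hdeg : ∀ v, G.degree v ≤ d := fun v => (hG v).le
  set m : ℝ := ε * Fintype.card V with hm
  have hη0 : 2 * η * Fintype.card V ≤ m := by
    have hηn : 0 < η * Fintype.card V := (abs_nonneg _).trans_lt (h.typicalAt_left r le_rfl).sum
    have hd' : (1 : ℝ) ≤ d := Nat.one_le_cast.2 hd
    linarith [mul_le_mul_of_nonneg_right hd' hηn.le, congr_arg (· * (Fintype.card V : ℝ)) hη]
  have hball' : (d + 1 : ℝ) ^ j < m / 2 :=
    hball.trans_le ((mul_le_mul_of_nonneg_right (min_le_right _ _) (Nat.cast_nonneg _)).trans_eq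
      (by ring))
  have hm1 : 1 ≤ m := by
    linarith [one_le_pow₀ (n := j) (show (1 : ℝ) ≤ d + 1 from le_add_of_nonneg_left d.cast_nonneg)]
  have hY : (d + 4) * m ≤ (survivingVerts (openSubgraph G s) j).card := by
    have hT : (d + 5) * m ≤ T * Fintype.card V := by
      rw [hm, ← mul_assoc]
      exact mul_le_mul_of_nonneg_right hεT (Nat.cast_nonneg _)
    linarith [(h.typicalAt_left j hjr).le_card_survivingVerts hdeg hd (hlow j)]
  have hU := robustlyUnsplit_of_not_badSplit h.not_badSplit hdeg hK (by lia) hN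
  rw [show 2 * (ε / 2 * (Fintype.card V : ℝ)) = m by ring] at hU
  have hdm : 0 ≤ d * m := by positivity
  refine (abs_card_core_degree_sub_card_aliveNeighbors_le
    (openSubgraph_mono G Finset.subset_union_left) (openSubgraph_le G _) hdeg (by lia) hjr hm1 hU
    (by linarith) ((Nat.cast_le.2 (Finset.card_le_card (survivingVerts_sdiff_subset _ _ j))).trans
      (h.card_aliveNeighbors_ne_le hd hη hjr (hlow j) (hup j le_rfl))) ?_ hc₁ hk).trans ?_
  · push_cast
    linarith
  · linarith [h.card_aliveNeighbors_ne_le hd hη le_rfl (hlow r) (hup r hjr)]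

end Deterministic

section Conclusion

open Filter Topology

lemma mul_exp_le_exp {M c c' x : ℝ} (h : M ≤ (c - c') * x) :
    M * Real.exp (-c * x) ≤ Real.exp (-c' * x) := by
  have hM : M ≤ Real.exp ((c - c') * x) := by linarith [Real.add_one_le_exp ((c - c') * x)]
  calc M * Real.exp (-c * x) ≤ Real.exp ((c - c') * x) * Real.exp (-c * x) :=
        mul_le_mul_of_nonneg_right hM (Real.exp_pos _).le
    _ = Real.exp (-c' * x) := by rw [← Real.exp_add]; ring_nf

lemma abs_div_sub_lt {x y n a η β β' ε : ℝ} (hn : 0 < n) (hxy : |x - y| ≤ a * n)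
    (hy : |y - n * β'| < η * n) (hβ : |β' - β| < η) (hε : a + 2 * η ≤ ε) : |x / n - β| < ε := by
  have hβn : |(β' - β) * n| < η * n := by
    rw [abs_mul, abs_of_pos hn]
    exact mul_lt_mul_of_pos_right hβ hn
  rw [show x / n - β = (x - β * n) / n by field_simp, abs_div, abs_of_pos hn, div_lt_iff₀ hn]
  calc |x - β * n| = |(x - y) + (y - n * β') + (β' - β) * n| := by ring_nf
    _ ≤ |x - y| + |y - n * β'| + |(β' - β) * n| := abs_add_three _ _ _
    _ < a * n + η * n + η * n := by linarith
    _ = (a + 2 * η) * n := by ring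
    _ ≤ ε * n := mul_le_mul_of_nonneg_right hε hn.le

lemma eventually_eventually_div_add_one_mul_le {A σ : ℝ} (hσ : 0 < σ) :
    ∀ᶠ r : ℕ in atTop, ∀ᶠ n : ℕ in atTop, ((n : ℝ) / (r + 1) + 1) * A ≤ σ * n := by
  have hlarge : ∀ᶠ m : ℕ in atTop, 2 * A / σ ≤ m :=
    tendsto_natCast_atTop_atTop.eventually_ge_atTop _
  filter_upwards [hlarge] with r hr
  filter_upwards [hlarge] with n hn
  rw [div_le_iff₀ hσ] at hr hn
  have hdiv : (n : ℝ) / (r + 1) * A ≤ σ * n / 2 := by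
    rw [div_mul_eq_mul_div, div_le_iff₀ (by positivity)]
    linarith [mul_le_mul_of_nonneg_right hr (Nat.cast_nonneg (α := ℝ) n),
      mul_nonneg hσ.le (Nat.cast_nonneg (α := ℝ) n)]
  linarith

lemma girth_le_card {V : Type*} [Fintype V] (G : SimpleGraph V) : G.girth ≤ Fintype.card V := by
  by_cases h : G.IsAcyclic
  · exact (SimpleGraph.girth_eq_zero.2 h).trans_le (Nat.zero_le _)
  · obtain ⟨a, w, hw, hlength⟩ := SimpleGraph.exists_girth_eq_length.2 h
    simpa [hlength] using hw.support_nodup.length_le_card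

section UnionBound

variable {α : Type*} [DecidableEq α] {p p₁ p₂ x y z : ℝ} {E : Finset α} {S U P : Finset α → Prop}
  {B : Finset α → Finset α → Prop}

lemma bernoulliProb_sprinkle (h : 1 - p = (1 - p₁) * (1 - p₂)) (E : Finset α)
    (P : Finset α → Prop) :
    bernoulliProb p E P = bernoulliMean p₁ E fun s => bernoulliProb p₂ E fun t => P (s ∪ t) :=
  bernoulliMean_sprinkle h E _

lemma one_sub_le_bernoulliProb_of_sprinkle (h01 : 0 ≤ p₁) (h11 : p₁ ≤ 1) (h02 : 0 ≤ p₂)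
    (h12 : p₂ ≤ 1) (hp : 1 - p = (1 - p₁) * (1 - p₂))
    (himp : ∀ s ⊆ E, ∀ t ⊆ E, S s → U (s ∪ t) → ¬ B s t → P (s ∪ t))
    (hS : bernoulliProb p₁ E (fun s => ¬ S s) ≤ x) (hU : bernoulliProb p E (fun s => ¬ U s) ≤ y)
    (hB : ∀ s, bernoulliProb p₂ E (B s) ≤ z) :
    1 - (x + y + z) ≤ bernoulliProb p E P := by
  rw [sub_le_comm, ← bernoulliProb_not, bernoulliProb_sprinkle hp]
  rw [bernoulliProb_sprinkle hp] at hU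
  calc bernoulliMean p₁ E (fun s => bernoulliProb p₂ E fun t => ¬ P (s ∪ t))
      ≤ bernoulliMean p₁ E (fun s => (if ¬ S s then 1 else 0)
          + bernoulliProb p₂ E (fun t => ¬ U (s ∪ t)) + z) :=
        bernoulliMean_mono h01 h11 fun s hs => ?_
    _ = bernoulliProb p₁ E (fun s => ¬ S s)
          + bernoulliMean p₁ E (fun s => bernoulliProb p₂ E fun t => ¬ U (s ∪ t)) + z := by
        rw [bernoulliMean_add, bernoulliMean_add, bernoulliMean_const, bernoulliMean_ite]
    _ ≤ x + y + z := by gcongr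
  by_cases hs' : S s
  · have hsplit : bernoulliProb p₂ E (fun t => ¬ P (s ∪ t))
        ≤ bernoulliProb p₂ E (fun t => ¬ U (s ∪ t)) + bernoulliProb p₂ E (B s) :=
      (bernoulliProb_mono h02 h12 fun t ht hP => or_iff_not_imp_left.2 fun hu => not_not.1 fun hB =>
        hP (himp s hs t ht hs' (not_not.1 hu) hB)).trans (bernoulliProb_or_le h02 h12 _ _)
    rw [if_neg (not_not.2 hs'), zero_add]
    exact hsplit.trans (add_le_add_right (hB s) _)
  · rw [if_pos hs']
    linarith [bernoulliProb_le_one (E := E) h02 h12 fun t => ¬ P (s ∪ t),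
      bernoulliProb_nonneg (E := E) h02 h12 fun t => ¬ U (s ∪ t),
      (bernoulliProb_nonneg h02 h12 _).trans (hB s)]

end UnionBound

/-- In every largest component of `H`, for `2 ≤ k ≤ d`, the proportion of vertices of degree `k` in
the 2-core is within `ε` of `β k`. -/
def CoreDegreesWithin {V : Type} [Fintype V] (H : SimpleGraph V) (d : ℕ) (β : ℕ → ℝ) (ε : ℝ) :
    Prop :=
  ∀ c₁ : H.ConnectedComponent, IsLargestComp H c₁ → ∀ k : ℕ, 2 ≤ k → k ≤ d →
    |((Finset.univ.filter fun v : V => ((twoCoreComp H c₁).neighborSet v).ncard = k).card : ℝ)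
        / Fintype.card V - β k| < ε

variable {d : ℕ} {p p₁ p₂ q b c₀ ε η σ : ℝ}

lemma exists_goodSample_bound (d r : ℕ) (h01 : 0 ≤ p₁) (h11 : p₁ ≤ 1) (h02 : 0 ≤ p₂)
    (h12 : p₂ ≤ 1) (hp : 1 - p = (1 - p₁) * (1 - p₂)) (hη : 0 < η) (hc₀ : 0 < c₀) :
    ∃ c > 0, ∃ M : ℝ, ∀ (V : Type) [Fintype V] (G : SimpleGraph V), G.IsRegularOfDegree d →
      2 * r + 2 < G.girth → ∀ (K : ℕ) (τ δ : ℝ),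
      (∀ s, bernoulliProb p₂ (edgeFinset' G) (BadSplit G K τ δ s)
        ≤ 3 * Real.exp (-c₀ * Fintype.card V)) →
      ∀ P : Finset (Sym2 V) → Prop,
      (∀ s ⊆ edgeFinset' G, ∀ t ⊆ edgeFinset' G, GoodSample G d K r p₁ p η τ δ s t → P (s ∪ t)) →
      1 - M * Real.exp (-c * Fintype.card V) ≤ bernoulliProb p (edgeFinset' G) P := by
  have hp0 : 0 ≤ p := by
    linarith [mul_le_one₀ (sub_le_self 1 h01) (sub_nonneg.2 h12) (sub_le_self 1 h02)]
  have hp1 : p ≤ 1 := sub_nonneg.1 (hp ▸ mul_nonneg (sub_nonneg.2 h11) (sub_nonneg.2 h12))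
  obtain ⟨c₁, hc₁, hS⟩ := exists_not_forall_typicalAt_bound d r h01 h11 hη
  obtain ⟨c₂, hc₂, hU⟩ := exists_not_forall_typicalAt_bound d r hp0 hp1 hη
  refine ⟨min c₀ (min c₁ c₂), lt_min hc₀ (lt_min hc₁ hc₂), 2 * ((r + 1) * (2 * d + 4)) + 3,
    fun V _ G hG hg K τ δ hB P hP => ?_⟩
  have hexp : ∀ {M c' : ℝ}, 0 ≤ M → min c₀ (min c₁ c₂) ≤ c' →
      M * Real.exp (-c' * Fintype.card V)
        ≤ M * Real.exp (-min c₀ (min c₁ c₂) * Fintype.card V) := fun hM hc =>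
    mul_le_mul_of_nonneg_left (Real.exp_le_exp.2
      (mul_le_mul_of_nonneg_right (neg_le_neg hc) (Nat.cast_nonneg _))) hM
  have hM : (0 : ℝ) ≤ (r + 1) * (2 * d + 4) := by positivity
  have hbound := one_sub_le_bernoulliProb_of_sprinkle h01 h11 h02 h12 hp (P := P)
    (fun s hs t ht hs' hu hB => hP s hs t ht ⟨hs', hu, hB⟩)
    ((hS V G hG hg).trans (hexp hM (min_le_of_right_le (min_le_left _ _))))
    ((hU V G hG hg).trans (hexp hM (min_le_of_right_le (min_le_right _ _))))
    (fun s => (hB s).trans (hexp zero_le_three (min_le_left _ _)))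
  exact hbound.trans' (by linarith)

lemma exists_depths (hd : 3 ≤ d) (hp : 0 < p) (hp1 : p < 1) (hq0 : 0 ≤ q) (hq1 : q < 1)
    (hq : q = (1 - p + p * q) ^ (d - 1)) (hη : 0 < η) (hσ : 0 < σ) (K : ℕ) :
    ∃ j r N : ℕ, K ≤ j + 1 ∧ j ≤ r ∧ (∀ i ≥ j, branchProb d p i ≤ p * (1 - q) + η) ∧
      (∀ k, 1 ≤ k → k ≤ d →
        |binomialMass d (branchProb d p r) k - coreDegreeDensity d p q k| < η) ∧
      ∀ n : ℕ, N ≤ n → ((n : ℝ) / (r + 1) + 1) * (2 * (d + 1) ^ (j + 1)) ≤ σ * n ∧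
        (d + 1 : ℝ) ^ j < σ * n := by
  obtain ⟨j, hup, hK⟩ := ((eventually_forall_ge_atTop.2
    ((tendsto_branchProb hd hp hp1.le hq0 hq1 hq).eventually_le_const
      (lt_add_of_pos_right _ hη))).and (eventually_ge_atTop K)).exists
  obtain ⟨r, hbin, hjr, hsize⟩ := ((eventually_abs_binomialMass_sub_lt hd hp hp1 hq0 hq1 hq hη).and
    ((eventually_ge_atTop j).and (eventually_eventually_div_add_one_mul_le hσ))).exists
  obtain ⟨N, hN⟩ := eventually_atTop.1 (hsize.and
    ((tendsto_natCast_atTop_atTop.const_mul_atTop hσ).eventually_gt_atTop ((d + 1 : ℝ) ^ j)))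
  exact ⟨j, r, N, by lia, hjr, hup, hbin, hN⟩

lemma exists_sprinkle_complement (hp₁ : p₁ < p) (hp : p < 1) :
    ∃ p₂, 0 < p₂ ∧ p₂ ≤ 1 ∧ 1 - p = (1 - p₁) * (1 - p₂) := by
  have hpos : 0 < 1 - p₁ := by linarith
  refine ⟨(p - p₁) / (1 - p₁), div_pos (sub_pos.2 hp₁) hpos, (div_le_one hpos).2 (by linarith), ?_⟩
  field_simp
  ring

theorem exists_coreDegreesWithin_bound (hd : 3 ≤ d) (hp : 0 < p) (hp1 : p < 1) (hq0 : 0 ≤ q)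
    (hq1 : q < 1) (hq : q = (1 - p + p * q) ^ (d - 1)) (hε : 0 < ε) (hb : 0 < b) :
    ∃ c > 0, ∃ M : ℝ, ∃ R : ℕ, ∀ (V : Type) [Fintype V] [Nonempty V] (G : SimpleGraph V),
      IsExpander G b d → G.IsRegularOfDegree d → R ≤ G.girth →
      1 - M * Real.exp (-c * Fintype.card V) ≤ bernoulliProb p (edgeFinset' G)
        fun s => CoreDegreesWithin (openSubgraph G s) d (coreDegreeDensity d p q) ε := by
  obtain ⟨ε₁, hε₁, hε₁T, hε₁ε⟩ : ∃ ε₁ > 0, (d + 5) * ε₁ ≤ p * (1 - q) ∧ (d + 5) * ε₁ ≤ ε := by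
    have hmin : 0 < min (p * (1 - q)) ε := lt_min (mul_pos hp (sub_pos.2 hq1)) hε
    have hd5 : (0 : ℝ) < d + 5 := by positivity
    refine ⟨min (p * (1 - q)) ε / (d + 5), div_pos hmin hd5, ?_⟩
    rw [mul_div_cancel₀ _ hd5.ne']
    exact ⟨min_le_left _ _, min_le_right _ _⟩
  obtain ⟨η, hη, hηε⟩ : ∃ η > 0, 4 * d * η = ε₁ :=
    have hd4 : (0 : ℝ) < 4 * d := mul_pos zero_lt_four (Nat.cast_pos.2 (by lia))
    ⟨ε₁ / (4 * d), div_pos hε₁ hd4, mul_div_cancel₀ _ hd4.ne'⟩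
  obtain ⟨p₁, hp₁0, hp₁p, hlow⟩ := exists_lt_forall_le_branchProb hd hp hp1.le hq0 hq1 hq hη
  obtain ⟨p₂, hp₂0, hp₂1, hpp⟩ := exists_sprinkle_complement hp₁p hp1
  obtain ⟨c₀, hc₀, τ, hτ, K, hbad⟩ := exists_badSplit_bound d hb (half_pos hε₁) hp₂0 hp₂1
  obtain ⟨j, r, N, hK, hjr, hup, hbin, hN⟩ :=
    exists_depths hd hp hp1 hq0 hq1 hq hη (lt_min hτ (half_pos hε₁)) K
  obtain ⟨c, hc, M, hbound⟩ :=
    exists_goodSample_bound d r hp₁0.le (hp₁p.trans hp1).le hp₂0.le hp₂1 hpp hη hc₀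
  refine ⟨c, hc, M, max N (2 * r + 3), fun V _ _ G hexp hG hgirth => ?_⟩
  have hg : 2 * r + 2 < G.girth := (le_max_right _ _).trans hgirth
  obtain ⟨hsize, hball⟩ := hN (Fintype.card V)
    (((le_max_left _ _).trans hgirth).trans (girth_le_card G))
  have h4η : 4 * η ≤ ε₁ := by
    rw [← hηε]
    exact mul_le_mul_of_nonneg_right
      (le_mul_of_one_le_right zero_le_four (Nat.one_le_cast.2 (by lia))) hη.le
  refine hbound V G hG hg K τ (ε₁ / 2) (hbad V G hexp) _ fun s _ t _ h c₁ hc₁ k hk hkd => ?_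
  exact abs_div_sub_lt (Nat.cast_pos.2 Fintype.card_pos)
    ((h.abs_card_core_degree_sub_le hG (by lia) hηε hε₁T hlow hup hK hjr hg hsize hball hc₁
      hk).trans_eq (mul_assoc _ _ _).symm)
    ((h.typicalAt_union r le_rfl).count k hkd) (hbin k (by lia) hkd) (by linarith)

end Conclusion

theorem two_core_degree_distribution (d : ℕ) (hd : 3 ≤ d) (p q : ℝ)
    (hp : 1 / ((d : ℝ) - 1) < p) (hp1 : p < 1)
    (hq0 : 0 ≤ q) (hq1 : q < 1)
    (hq : q = (1 - p + p * q) ^ (d - 1))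
    (ε b : ℝ) (hε : 0 < ε) (hb : 0 < b) :
    ∃ c > (0:ℝ), ∃ R : ℕ, 0 < R ∧
      ∀ (V : Type) [Fintype V] [DecidableEq V] (G : SimpleGraph V),
        IsRegularExpander G b d → (R : ℕ∞) ≤ G.girth →
        1 - Real.exp (-c * Fintype.card V) ≤
          percProb G p (fun H =>
            ∀ c₁ : H.ConnectedComponent, IsLargestComp H c₁ →
              ∀ k : ℕ, 2 ≤ k → k ≤ d →
                |((Finset.univ.filter
                      (fun v : V => ((twoCoreComp H c₁).neighborSet v).ncard = k)).card : ℝ)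
                      / Fintype.card V
                  - (d.choose k : ℝ) * p ^ k * (1 - q) ^ k * q
                      / (1 - p + p * q) ^ (k - 1)| < ε) := by
  have hd1 : (0 : ℝ) < d - 1 := sub_pos.2 (Nat.one_lt_cast.2 (by lia))
  obtain ⟨c, hc, M, R, hbound⟩ := exists_coreDegreesWithin_bound hd
    ((one_div_pos.2 hd1).trans hp) hp1 hq0 hq1 hq hε hb
  obtain ⟨N, hN⟩ := exists_nat_ge (M / (c / 2))
  refine ⟨c / 2, half_pos hc, max R (N + 1), by positivity, fun V _ inst G hG hgirth => ?_⟩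
  obtain rfl : inst = fun a b => Classical.propDecidable (a = b) := Subsingleton.elim _ _
  have hR : max R (N + 1) ≤ G.girth := Nat.cast_le.1 hgirth
  have hcard : N < Fintype.card V := ((le_max_right _ _).trans hR).trans (girth_le_card G)
  have : Nonempty V := Fintype.card_pos_iff.1 (Nat.zero_lt_of_lt hcard)
  have hM : M ≤ (c - c / 2) * Fintype.card V := by
    rw [sub_half, mul_comm, ← div_le_iff₀ (half_pos hc)]
    exact hN.trans (Nat.cast_le.2 hcard.le)
  rw [percProb_eq_bernoulliProb]
  exact (sub_le_sub_left (mul_exp_le_exp hM) 1).trans (hbound V G hG.1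
    (fun v => (ncard_neighborSet G v).symm.trans (hG.2 v)) ((le_max_left _ _).trans hR))

end Percolation

end
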